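/- Let A be a σ-unital simple C*-algebra with QT̃(A) ≠ {0} and with strict comparison, and let x ∈ A⊗K. If d_τ(x*x) < ∞ for all τ ∈ QT̃(A) and ω(x*x) = 0, then x ∈ Ped(A⊗K). If furthermore x ∈ A, then x ∈ Ped(A). -/

import Mathlib

open scoped ENNReal
open Filter Topology

noncomputable section

namespace Paper

/-! ### Generic definitions in a (non-unital) C*-algebra -/

variable (R : Type*) [NonUnitalCStarAlgebra R] [PartialOrder R] [StarOrderedRing R]

variable {R} in
/-- The hereditary C*-subalgebra generated by `b`, i.e. `closure (b R b)`. -/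
def her (b : R) : Set R := closure {x : R | ∃ y : R, x = b * y * b}

/-- `I` is a (not necessarily closed) two-sided ideal of the subalgebra `B`. -/
def IsIdealIn (B I : Set R) : Prop :=
  I ⊆ B ∧ (0 : R) ∈ I ∧ (∀ x ∈ I, ∀ y ∈ I, x + y ∈ I) ∧ (∀ x ∈ I, -x ∈ I) ∧
    (∀ x ∈ I, ∀ b ∈ B, x * b ∈ I ∧ b * x ∈ I)

variable {R} in
/-- The Pedersen ideal of the subalgebra `B`: the minimal dense two-sided ideal of `B`,
equivalently the intersection of all dense two-sided ideals of `B`. -/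
def pedersenIn (B : Set R) : Set R :=
  ⋂ I ∈ {I : Set R | IsIdealIn R B I ∧ B ⊆ closure I}, I

/-- The Pedersen ideal of `R`. -/
def pedersen : Set R := pedersenIn (Set.univ : Set R)

variable {R} in
/-- Cuntz subequivalence `a ≲ b`. -/
def CuntzLE (a b : R) : Prop :=
  ∃ x : ℕ → R, Tendsto (fun n => ‖a - star (x n) * b * x n‖) atTop (𝓝 0)

variable {R} in
/-- Cuntz subequivalence relative to a subset `B` (the `xₙ` are taken in `B`). -/
def CuntzLEIn (B : Set R) (a b : R) : Prop :=
  ∃ x : ℕ → R, (∀ n, x n ∈ B) ∧ Tendsto (fun n => ‖a - star (x n) * b * x n‖) atTop (𝓝 0)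

variable {R} in
/-- Cuntz equivalence `a ∼ b`. -/
def CuntzEq (a b : R) : Prop := CuntzLE a b ∧ CuntzLE b a

/-- The cut-off function `f_ε`: `0` on `[0, ε/2]`, `1` on `[ε, ∞)`, linear in between. -/
def cutoff (ε : ℝ) : ℝ → ℝ := fun t => min 1 (max 0 (2 * t / ε - 1))

variable {R} in
/-- `f_ε(a)`, via the (non-unital) continuous functional calculus. -/
def fEps (ε : ℝ) (a : R) : R := cfcₙ (cutoff ε) a

/-- A densely defined 2-quasitrace on `R` (recorded by its values on positive elements;
the value on non-positive elements is normalised to `0`). -/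
structure QuasiTrace : Type _ where
  toFun : R → ℝ≥0∞
  zero_of_not_nonneg : ∀ a : R, ¬ (0 ≤ a) → toFun a = 0
  map_zero : toFun 0 = 0
  map_smul : ∀ (r : ℝ) (a : R), 0 < r → 0 ≤ a → toFun (r • a) = ENNReal.ofReal r * toFun a
  map_add_of_commute : ∀ a b : R, 0 ≤ a → 0 ≤ b → a * b = b * a →
    toFun (a + b) = toFun a + toFun b
  map_star_mul_self : ∀ x : R, toFun (star x * x) = toFun (x * star x)
  lowerSemicontinuousOn : LowerSemicontinuousOn toFun {a : R | 0 ≤ a}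
  finite_on_pedersen : ∀ a ∈ pedersen R, 0 ≤ a → toFun a < ∞
  exists_matrix_extension : ∃ σ : Matrix (Fin 2) (Fin 2) R → ℝ≥0∞,
    (∀ a : R, σ (fun i j => if i = 0 ∧ j = 0 then a else 0) = toFun a) ∧
    σ 0 = 0 ∧
    (∀ (r : ℝ) (x : Matrix (Fin 2) (Fin 2) R), 0 < r → (∃ y, x = star y * y) →
      σ (r • x) = ENNReal.ofReal r * σ x) ∧
    (∀ x y : Matrix (Fin 2) (Fin 2) R, (∃ z, x = star z * z) → (∃ z, y = star z * z) →
      x * y = y * x → σ (x + y) = σ x + σ y) ∧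
    (∀ x : Matrix (Fin 2) (Fin 2) R, σ (star x * x) = σ (x * star x))

/-- The topology of pointwise convergence on the Pedersen ideal. -/
instance : TopologicalSpace (QuasiTrace R) :=
  TopologicalSpace.induced (fun τ => fun a : pedersen R => τ.toFun a) inferInstance

variable {R}

/-- The zero quasitrace. -/
def QuasiTrace.IsZero (τ : QuasiTrace R) : Prop := ∀ a : R, τ.toFun a = 0

/-- The dimension function `d_τ(a) = lim_{ε → 0} τ(f_ε(a))`. -/
def dTau (τ : QuasiTrace R) (a : R) : ℝ≥0∞ :=
  ⨆ n : ℕ, τ.toFun (fEps (1 / (n + 1)) a)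

/-- `ω(a)` relative to a set `S` of quasitraces:
`lim_n sup {d_τ(a) - τ(f_{1/n}(a)) : τ ∈ S}`. -/
def omegaOn (S : Set (QuasiTrace R)) (a : R) : ℝ≥0∞ :=
  ⨅ n : ℕ, ⨆ τ ∈ S, (dTau τ a - τ.toFun (fEps (1 / (n + 1)) a))

/-- The seminorm `‖x‖_{2,S}`. -/
def norm2On (S : Set (QuasiTrace R)) (x : R) : ℝ≥0∞ :=
  ⨆ τ ∈ S, (τ.toFun (star x * x)) ^ (1 / 2 : ℝ)

variable (R)

/-- `R` has (Blackadar's) strict comparison. -/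
def StrictComparison : Prop :=
  ∀ a b : R, 0 ≤ a → 0 ≤ b →
    (∀ τ : QuasiTrace R, ¬ τ.IsZero → dTau τ a < dTau τ b) → CuntzLE a b

/-- `R` is a simple C*-algebra: it is nonzero and has no nontrivial closed two-sided ideals. -/
def IsSimpleCStar : Prop :=
  (∃ x : R, x ≠ 0) ∧
    ∀ I : TwoSidedIdeal R, IsClosed (I : Set R) → (I : Set R) = {0} ∨ (I : Set R) = Set.univ

/-- `R` is σ-unital: it contains a strictly positive element `h`
(equivalently, `Her(h) = R`). -/
def SigmaUnital : Prop := ∃ h : R, 0 ≤ h ∧ her h = Set.univ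

/-- `R` is elementary: isomorphic to the algebra of compact operators on some Hilbert space. -/
def IsElementary : Prop :=
  ∃ (H : Type) (_ : NormedAddCommGroup H) (_ : InnerProductSpace ℂ H) (_ : CompleteSpace H)
    (φ : R →⋆ₙₐ[ℂ] (H →L[ℂ] H)), Function.Injective φ ∧
      Set.range φ = {T : H →L[ℂ] H | IsCompactOperator (⇑T)}

/-- `R` is purely infinite: `R ≇ ℂ` and `b ≲ a` for all nonzero positive `a, b`. -/
def PurelyInfinite : Prop :=
  (¬ ∃ φ : R →⋆ₙₐ[ℂ] ℂ, Function.Bijective φ) ∧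
    ∀ a b : R, 0 ≤ a → 0 ≤ b → a ≠ 0 → b ≠ 0 → CuntzLE b a

/-- `R` is finite: its minimal unitization contains no non-unitary isometry. -/
def IsFiniteCStar : Prop :=
  ∀ v : Unitization ℂ R, star v * v = 1 → v * star v = 1

/-- `R` has stable rank one: the invertible elements are dense in the minimal unitization. -/
def StableRankOne : Prop := Dense {x : Unitization ℂ R | IsUnit x}

variable {R}

/-- `c` represents `n·[a]` in the Cuntz semigroup: it is the sum of `n` mutually
orthogonal positive elements, each Cuntz equivalent to `a`. -/
def IsNFoldRep (n : ℕ) (a c : R) : Prop :=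
  ∃ f : Fin n → R, (∀ i, 0 ≤ f i) ∧ (∀ i, CuntzEq (f i) a) ∧
    (∀ i j, i ≠ j → f i * f j = 0) ∧ c = ∑ i, f i

/-- `s` represents the supremum of the increasing sequence of Cuntz classes `[y n]`. -/
def IsCuntzLUB (y : ℕ → R) (s : R) : Prop :=
  (∀ n, CuntzLE (y n) s) ∧ ∀ c : R, 0 ≤ c → (∀ n, CuntzLE (y n) c) → CuntzLE s c

/-- `[x] ≪ [y]` in the Cuntz semigroup. -/
def CuntzWayBelow (x y : R) : Prop :=
  ∀ yseq : ℕ → R, (∀ n, 0 ≤ yseq n) → (∀ n, CuntzLE (yseq n) (yseq (n + 1))) →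
    ∀ s : R, 0 ≤ s → IsCuntzLUB yseq s → CuntzLE y s → ∃ n₀, CuntzLE x (yseq n₀)

variable (R)

/-- The Cuntz semigroup of `R` is almost unperforated. -/
def AlmostUnperforated : Prop :=
  ∀ (a b : R) (k : ℕ), 1 ≤ k → 0 ≤ a → 0 ≤ b →
    (∃ c d : R, IsNFoldRep (k + 1) a c ∧ IsNFoldRep k b d ∧ CuntzLE c d) → CuntzLE a b

/-- The Cuntz semigroup of `R` is almost divisible. -/
def AlmostDivisible : Prop :=
  ∀ x y : R, 0 ≤ x → 0 ≤ y → CuntzWayBelow x y → ∀ n : ℕ, 1 ≤ n →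
    ∃ z : R, 0 ≤ z ∧ (∃ c : R, IsNFoldRep n z c ∧ CuntzLE c y) ∧
      (∃ c : R, IsNFoldRep (n + 1) z c ∧ CuntzLE x c)

/-! ### The stabilization `W ≅ A ⊗ K` -/

variable (A W : Type*) [NonUnitalCStarAlgebra A] [PartialOrder A] [StarOrderedRing A]
  [NonUnitalCStarAlgebra W] [PartialOrder W] [StarOrderedRing W]

/-- A realization of `W` as the stabilization `A ⊗ K`: the maps `emb i j : a ↦ a ⊗ e_{ij}`
are isometric, satisfy the matrix-unit relations, and have dense joint linear span. -/
structure Stabilization : Type _ where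
  emb : ℕ → ℕ → (A →ₗ[ℂ] W)
  emb_mul : ∀ (i j k l : ℕ) (a b : A),
    emb i j a * emb k l b = if j = k then emb i l (a * b) else 0
  emb_star : ∀ (i j : ℕ) (a : A), star (emb i j a) = emb j i (star a)
  norm_emb : ∀ (i j : ℕ) (a : A), ‖emb i j a‖ = ‖a‖
  dense_span : Dense (Submodule.span ℂ {w : W | ∃ (i j : ℕ) (a : A), w = emb i j a} : Set W)

variable {A W}

/-- The set `QT(A)` of quasitraces normalized on `A ⊆ A ⊗ K`. -/
def QTSet (SB : Stabilization A W) : Set (QuasiTrace W) :=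
  {τ | (⨆ a : {a : A // 0 ≤ a ∧ ‖a‖ ≤ 1}, τ.toFun (SB.emb 0 0 a)) = 1}

/-- The quasitraces normalized on the hereditary subalgebra `Her(c) ⊆ W`. -/
def QTSetHer (c : W) : Set (QuasiTrace W) :=
  {τ : QuasiTrace W |
    (⨆ a : {a : W // a ∈ her c ∧ 0 ≤ a ∧ ‖a‖ ≤ 1}, τ.toFun a) = 1}

/-- `ω(a) = 0` for `a ∈ W = A ⊗ K`, computed relative to `\overline{QT(Her(e))}^w`
for any nonzero `e ∈ Ped(A)₊`. -/
def OmegaZero (SB : Stabilization A W) (a : W) : Prop :=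
  ∀ e : A, 0 ≤ e → e ≠ 0 → e ∈ pedersen A →
    omegaOn (closure (QTSetHer (SB.emb 0 0 e))) a = 0

/-- `A` has tracial approximate oscillation zero. -/
def TAOZ (SB : Stabilization A W) : Prop :=
  ∀ e : A, 0 ≤ e → e ≠ 0 → e ∈ pedersen A →
    ∀ a : W, 0 ≤ a → a ∈ pedersen W →
      ∃ b : ℕ → W, (∀ n, 0 ≤ b n) ∧ (∀ n, ‖b n‖ ≤ 1) ∧
        (∀ n, b n ∈ pedersenIn (her a)) ∧
        Tendsto (fun n => omegaOn (closure (QTSetHer (SB.emb 0 0 e))) (b n)) atTop (𝓝 0) ∧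
        Tendsto (fun n => norm2On (closure (QTSetHer (SB.emb 0 0 e))) (a - b n)) atTop (𝓝 0)

/-! ### Affine functions on the quasitrace cone and the map `Γ` -/

variable (W) in
/-- `ρ = t·τ + (1-t)·σ` as quasitraces. -/
def IsCombo (t : ℝ) (τ σ ρ : QuasiTrace W) : Prop :=
  ∀ a : W, 0 ≤ a →
    ρ.toFun a = ENNReal.ofReal t * τ.toFun a + ENNReal.ofReal (1 - t) * σ.toFun a

variable (W) in
/-- `f` is affine on the quasitrace cone. -/
def IsAffineQT (f : QuasiTrace W → ℝ≥0∞) : Prop :=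
  ∀ t : ℝ, 0 ≤ t → t ≤ 1 → ∀ τ σ ρ : QuasiTrace W, IsCombo W t τ σ ρ →
    f ρ = ENNReal.ofReal t * f τ + ENNReal.ofReal (1 - t) * f σ

variable (W) in
/-- Membership in `Aff₊(QT̃(A))`. -/
def MemAffPlus (f : QuasiTrace W → ℝ≥0∞) : Prop :=
  (∀ τ, f τ = 0) ∨
    (Continuous f ∧ IsAffineQT W f ∧ (∀ τ, f τ < ∞) ∧
      (∀ τ : QuasiTrace W, ¬ τ.IsZero → 0 < f τ) ∧
      (∀ τ : QuasiTrace W, τ.IsZero → f τ = 0))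

variable (W) in
/-- Membership in `LAff₊(QT̃(A))`. -/
def MemLAffPlus (f : QuasiTrace W → ℝ≥0∞) : Prop :=
  ∃ g : ℕ → QuasiTrace W → ℝ≥0∞, (∀ n, MemAffPlus W (g n)) ∧
    (∀ n τ, g n τ ≤ g (n + 1) τ) ∧ ∀ τ, f τ = ⨆ n, g n τ

variable (W) in
/-- The canonical map `Γ : Cu(A) → LAff₊(QT̃(A))`, `Γ([a])(τ) = d_τ(a)`, is surjective. -/
def GammaSurjective : Prop :=
  ∀ f : QuasiTrace W → ℝ≥0∞, MemLAffPlus W f →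
    ∃ a : W, 0 ≤ a ∧ ∀ τ : QuasiTrace W, dTau τ a = f τ


section Helpers

set_option linter.unusedSectionVars false

theorem cutoff_continuous (ε : ℝ) : Continuous (cutoff ε) := by
  unfold cutoff; fun_prop

theorem cutoff_nonneg (ε t : ℝ) : 0 ≤ cutoff ε t := by
  unfold cutoff; exact le_min zero_le_one (le_max_left _ _)

theorem cutoff_le_one (ε t : ℝ) : cutoff ε t ≤ 1 := min_le_left _ _

theorem cutoff_eq_zero {ε t : ℝ} (hε : 0 < ε) (h : t ≤ ε / 2) : cutoff ε t = 0 := by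
  unfold cutoff
  have : 2 * t / ε - 1 ≤ 0 := by
    rw [sub_nonpos, div_le_one hε]; linarith
  rw [max_eq_left this]; simp

theorem cutoff_eq_one {ε t : ℝ} (hε : 0 < ε) (h : ε ≤ t) : cutoff ε t = 1 := by
  unfold cutoff
  have : 1 ≤ 2 * t / ε - 1 := by
    have : 2 ≤ 2 * t / ε := by
      rw [le_div_iff₀ hε]; linarith
    linarith
  exact min_eq_left (this.trans (le_max_right _ _))

theorem cutoff_anti {ε ε' t : ℝ} (hε : 0 < ε) (h : ε ≤ ε') (ht : 0 ≤ t) :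
    cutoff ε' t ≤ cutoff ε t := by
  unfold cutoff
  have : 2 * t / ε' ≤ 2 * t / ε := by gcongr
  gcongr

theorem cutoff_zero_pt {ε : ℝ} (hε : 0 < ε) : cutoff ε 0 = 0 :=
  cutoff_eq_zero hε (by linarith)

/-- `cutoff ε t / t`, continuous version. -/
def kfun (ε : ℝ) : ℝ → ℝ := fun t => cutoff ε t / max t (ε / 2)

theorem kfun_continuous {ε : ℝ} (hε : 0 < ε) : Continuous (kfun ε) := by
  unfold kfun
  refine (cutoff_continuous ε).div (by fun_prop) (fun t => ?_)
  have : 0 < max t (ε / 2) := lt_max_of_lt_right (by linarith)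
  exact this.ne'

theorem kfun_zero {ε : ℝ} (hε : 0 < ε) : kfun ε 0 = 0 := by
  simp [kfun, cutoff_zero_pt hε]

theorem kfun_mul {ε : ℝ} (hε : 0 < ε) (t : ℝ) : kfun ε t * t = cutoff ε t := by
  unfold kfun
  rcases le_or_gt t (ε / 2) with h | h
  · simp [cutoff_eq_zero hε h]
  · rw [max_eq_left h.le]
    have : t ≠ 0 := by
      have : 0 < t := by linarith
      exact this.ne'
    field_simp

theorem kfun_abs_le {ε : ℝ} (hε : 0 < ε) (t : ℝ) : |kfun ε t| ≤ 2 / ε := by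
  unfold kfun
  have h0 : 0 < max t (ε / 2) := lt_max_of_lt_right (by linarith)
  rw [abs_of_nonneg (div_nonneg (cutoff_nonneg _ _) h0.le), div_le_div_iff₀ h0 hε]
  have h1 := cutoff_le_one ε t
  have h2 := le_max_right t (ε / 2)
  nlinarith [cutoff_nonneg ε t]

variable {B : Type*} [NonUnitalCStarAlgebra B] [PartialOrder B] [StarOrderedRing B]

theorem cfc_mul_eq {f g h : ℝ → ℝ} {a : B} (ha : 0 ≤ a) (hf : Continuous f) (hf0 : f 0 = 0)
    (hg : Continuous g) (hg0 : g 0 = 0) (H : ∀ t, 0 ≤ t → f t * g t = h t) :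
    cfcₙ f a * cfcₙ g a = cfcₙ h a := by
  rw [← cfcₙ_mul f g a hf.continuousOn hf0 hg.continuousOn hg0]
  refine cfcₙ_congr fun t ht => H t (quasispectrum_nonneg_of_nonneg a ha t ht)

theorem cfc_id_mul {f h : ℝ → ℝ} {a : B} (ha : 0 ≤ a) (hf : Continuous f) (hf0 : f 0 = 0)
    (H : ∀ t, 0 ≤ t → t * f t = h t) : a * cfcₙ f a = cfcₙ h a := by
  have h1 : cfcₙ (fun t : ℝ => t) a = a := cfcₙ_id' ℝ a (IsSelfAdjoint.of_nonneg ha)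
  have := cfc_mul_eq (h := h) ha continuous_id rfl hf hf0 (by simpa using H)
  rw [← this]; congr 1; exact h1.symm

theorem cfc_mul_id {f h : ℝ → ℝ} {a : B} (ha : 0 ≤ a) (hf : Continuous f) (hf0 : f 0 = 0)
    (H : ∀ t, 0 ≤ t → f t * t = h t) : cfcₙ f a * a = cfcₙ h a := by
  have h1 : cfcₙ (fun t : ℝ => t) a = a := cfcₙ_id' ℝ a (IsSelfAdjoint.of_nonneg ha)
  have := cfc_mul_eq (h := h) ha hf hf0 continuous_id rfl (by simpa using H)
  rw [← this]; congr 1; exact h1.symm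

theorem cfc_norm_le {f : ℝ → ℝ} {a : B} (ha : 0 ≤ a) {c : ℝ} (H : ∀ t, 0 ≤ t → |f t| ≤ c) :
    ‖cfcₙ f a‖ ≤ c :=
  norm_cfcₙ_le fun t ht => H t (quasispectrum_nonneg_of_nonneg a ha t ht)

theorem cfc_sa (f : ℝ → ℝ) (a : B) : star (cfcₙ f a) = cfcₙ f a :=
  (cfcₙ_predicate (p := IsSelfAdjoint) f a).star_eq

theorem cfc_nonneg' {f : ℝ → ℝ} {a : B} (ha : 0 ≤ a) (H : ∀ t, 0 ≤ t → 0 ≤ f t) : 0 ≤ cfcₙ f a :=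
  cfcₙ_nonneg fun t ht => H t (quasispectrum_nonneg_of_nonneg a ha t ht)

theorem cfc_cutoff_ne_zero {a : B} (ha : 0 ≤ a) {ε : ℝ} (hε : 0 < ε) (h : ε ≤ ‖a‖) :
    cfcₙ (cutoff ε) a ≠ 0 := by
  intro h0
  have key : ∀ t ∈ quasispectrum ℝ a, t ≤ ε := by
    intro t ht
    by_contra hlt
    push Not at hlt
    have := norm_apply_le_norm_cfcₙ (cutoff ε) a ht (cutoff_continuous ε).continuousOn
      (cutoff_zero_pt hε) (IsSelfAdjoint.of_nonneg ha)
    rw [h0, cutoff_eq_one hε hlt.le] at this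
    norm_num at this
  have key3 : ∀ t ∈ quasispectrum ℝ a, ‖t‖ ≤ ε / 2 := by
    intro t ht
    have ht0 := quasispectrum_nonneg_of_nonneg a ha t ht
    rw [Real.norm_of_nonneg ht0]
    have h1 := norm_apply_le_norm_cfcₙ (cutoff ε) a ht (cutoff_continuous ε).continuousOn
      (cutoff_zero_pt hε) (IsSelfAdjoint.of_nonneg ha)
    rw [h0, norm_zero] at h1
    have h2 : cutoff ε t = 0 := norm_le_zero_iff.mp h1
    by_contra hlt
    push Not at hlt
    have h3 : 0 < 2 * t / ε - 1 := by
      rw [sub_pos, lt_div_iff₀ hε]; linarith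
    have : 0 < cutoff ε t := lt_min one_pos (lt_max_of_lt_right h3)
    linarith
  have h1 : cfcₙ (fun t : ℝ => t) a = a := cfcₙ_id' ℝ a (IsSelfAdjoint.of_nonneg ha)
  have h2 : ‖cfcₙ (fun t : ℝ => t) a‖ ≤ ε / 2 := norm_cfcₙ_le key3
  rw [h1] at h2
  linarith

theorem unique_neumann {d v : B} (hd : ‖d‖ < 1) (h : v - d * v = 0) : v = 0 := by
  have h1 : v = d * v := sub_eq_zero.mp h
  have h2 : ‖v‖ ≤ ‖d‖ * ‖v‖ := by
    calc ‖v‖ = ‖d * v‖ := by rw [← h1]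
      _ ≤ _ := norm_mul_le _ _
  have : ‖v‖ ≤ 0 := by nlinarith [norm_nonneg v]
  exact norm_le_zero_iff.mp this

theorem exists_neumann (d k : B) (hd : ‖d‖ ≤ 1 / 2) :
    ∃ y : B, y - d * y = k ∧ ‖y‖ ≤ 2 * ‖k‖ := by
  have hC : ContractingWith (1 / 2) (fun y : B => k + d * y) := by
    refine ⟨by rw [← NNReal.coe_lt_coe]; norm_num, LipschitzWith.of_dist_le_mul fun y z => ?_⟩
    rw [dist_eq_norm, dist_eq_norm]
    have : k + d * y - (k + d * z) = d * (y - z) := by rw [mul_sub]; abel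
    rw [this]
    refine (norm_mul_le _ _).trans ?_
    push_cast
    gcongr
  obtain ⟨y, hy, -⟩ := hC.exists_fixedPoint 0 (edist_ne_top _ _)
  have hy' : k + d * y = y := hy
  refine ⟨y, by rw [sub_eq_iff_eq_add]; exact hy'.symm, ?_⟩
  have h1 : ‖y‖ ≤ ‖k‖ + ‖d‖ * ‖y‖ := by
    calc ‖y‖ = ‖k + d * y‖ := by rw [hy']
      _ ≤ ‖k‖ + ‖d * y‖ := norm_add_le _ _
      _ ≤ _ := by gcongr; exact norm_mul_le _ _
  nlinarith [norm_nonneg y, norm_nonneg k]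

/-- Functions of a positive element vanishing near zero lie in every dense ideal. -/
theorem cfc_mem_ideal {J : Set B} (hJ : IsIdealIn B Set.univ J) (hd : Set.univ ⊆ closure J)
    {b : B} (hb : 0 ≤ b) {f : ℝ → ℝ} (hf : Continuous f) {δ : ℝ} (hδ : 0 < δ)
    (hf0 : ∀ t, 0 ≤ t → t ≤ δ → f t = 0) : cfcₙ f b ∈ J := by
  obtain ⟨-, -, -, -, hmul⟩ := hJ
  have hf00 : f 0 = 0 := hf0 0 le_rfl hδ.le
  set k : B := cfcₙ (kfun δ) b with hk
  obtain ⟨z, hz, hzb⟩ := Metric.mem_closure_iff.mp (hd (Set.mem_univ b)) (1 / (2 * (‖k‖ + 1)))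
    (by positivity)
  set d : B := cfcₙ (cutoff δ) b - k * z with hdd
  have hkb : k * b = cfcₙ (cutoff δ) b :=
    cfc_mul_id hb (kfun_continuous hδ) (kfun_zero hδ) (fun t _ => kfun_mul hδ t)
  have hdn : ‖d‖ ≤ 1 / 2 := by
    rw [hdd, ← hkb, ← mul_sub]
    refine (norm_mul_le _ _).trans ?_
    rw [dist_eq_norm] at hzb
    have h1 : ‖k‖ * ‖b - z‖ ≤ (‖k‖ + 1) * (1 / (2 * (‖k‖ + 1))) := by
      gcongr
      linarith
    refine h1.trans (le_of_eq ?_)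
    have : ‖k‖ + 1 ≠ 0 := by positivity
    field_simp
  obtain ⟨y, hy, -⟩ := exists_neumann d k hdn
  have hcf : cfcₙ (cutoff δ) b * cfcₙ f b = cfcₙ f b := by
    refine cfc_mul_eq hb (cutoff_continuous δ) (cutoff_zero_pt hδ) hf hf00 (fun t ht => ?_)
    rcases le_total t δ with h | h
    · simp [hf0 t ht h]
    · simp [cutoff_eq_one hδ h]
  have h1 : cfcₙ f b - d * cfcₙ f b = k * z * cfcₙ f b := by
    rw [hdd, sub_mul, hcf]; abel
  have h2 : (cfcₙ f b - y * z * cfcₙ f b) - d * (cfcₙ f b - y * z * cfcₙ f b) = 0 := by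
    have h3 : (cfcₙ f b - y * z * cfcₙ f b) - d * (cfcₙ f b - y * z * cfcₙ f b)
      = (cfcₙ f b - d * cfcₙ f b) - (y - d * y) * z * cfcₙ f b := by
      noncomm_ring
    rw [h3, h1, hy, sub_self]
  have h4 := unique_neumann (by linarith) h2
  rw [sub_eq_zero.mp h4]
  exact (hmul _ (hmul z hz y (Set.mem_univ _)).2 _ (Set.mem_univ _)).1

theorem cfc_mem_pedersen {b : B} (hb : 0 ≤ b) {f : ℝ → ℝ} (hf : Continuous f) {δ : ℝ}
    (hδ : 0 < δ) (hf0 : ∀ t, 0 ≤ t → t ≤ δ → f t = 0) : cfcₙ f b ∈ pedersen B := by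
  refine Set.mem_iInter₂.mpr fun J hJ => cfc_mem_ideal hJ.1 hJ.2 hb hf hδ hf0

/-! quasitraces -/

theorem tau_le_of_commute (τ : QuasiTrace B) {a b : B} (ha : 0 ≤ a) (hab : a ≤ b)
    (hc : a * b = b * a) : τ.toFun a ≤ τ.toFun b := by
  have h := τ.map_add_of_commute a (b - a) ha (sub_nonneg.mpr hab)
    (by rw [mul_sub, sub_mul, hc])
  rw [add_sub_cancel] at h
  rw [h]; exact le_self_add

theorem tau_mono (τ : QuasiTrace B) {a : B} (ha : 0 ≤ a) {f g : ℝ → ℝ} (hf : Continuous f)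
    (hf0 : f 0 = 0) (hg : Continuous g) (hg0 : g 0 = 0) (h0 : ∀ t, 0 ≤ t → 0 ≤ f t)
    (h : ∀ t, 0 ≤ t → f t ≤ g t) : τ.toFun (cfcₙ f a) ≤ τ.toFun (cfcₙ g a) := by
  refine tau_le_of_commute τ (cfc_nonneg' ha h0) ?_ ?_
  · exact cfcₙ_mono (fun t ht => h t (quasispectrum_nonneg_of_nonneg a ha t ht))
      hf.continuousOn hg.continuousOn hf0 hg0
  · exact (cfcₙ_commute_cfcₙ f g a).eq

theorem tau_add (τ : QuasiTrace B) {a : B} (ha : 0 ≤ a) {f g : ℝ → ℝ} (hf : Continuous f)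
    (hf0 : f 0 = 0) (hg : Continuous g) (hg0 : g 0 = 0) (h0 : ∀ t, 0 ≤ t → 0 ≤ f t)
    (h1 : ∀ t, 0 ≤ t → 0 ≤ g t) :
    τ.toFun (cfcₙ (fun t => f t + g t) a) = τ.toFun (cfcₙ f a) + τ.toFun (cfcₙ g a) := by
  rw [cfcₙ_add f g a hf.continuousOn hf0 hg.continuousOn hg0]
  exact τ.map_add_of_commute _ _ (cfc_nonneg' ha h0) (cfc_nonneg' ha h1)
    (cfcₙ_commute_cfcₙ f g a).eq

/-- If `E y = y`, then `τ(y) ≤ ‖y‖ τ(E²)`. -/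
theorem tau_le_unit (τ : QuasiTrace B) {E y : B} (hE : star E = E) (hy : 0 ≤ y) (h : E * y = y) :
    τ.toFun y ≤ ENNReal.ofReal ‖y‖ * τ.toFun (E * E) := by
  rcases eq_or_ne y 0 with rfl | hne
  · simp [τ.map_zero]
  have hys : star y = y := (IsSelfAdjoint.of_nonneg hy).star_eq
  have h' : y * E = y := by
    have := congrArg star h
    rwa [star_mul, hE, hys] at this
  have hpos : 0 < ‖y‖ := norm_pos_iff.mpr hne
  have hEE : 0 ≤ E * E := by
    have := star_mul_self_nonneg E
    rwa [hE] at this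
  rw [← τ.map_smul _ _ hpos hEE]
  refine tau_le_of_commute τ hy ?_ ?_
  · have := CStarAlgebra.star_left_conjugate_le_norm_smul (a := E) (b := y)
      (IsSelfAdjoint.of_nonneg hy)
    rwa [hE, h, h'] at this
  · rw [mul_smul_comm, smul_mul_assoc, ← mul_assoc, h', h', mul_assoc, h, h]

theorem dTau_le_cfc (τ : QuasiTrace B) {a : B} (ha : 0 ≤ a) {f : ℝ → ℝ} (hf : Continuous f)
    (hf0 : ∀ t, 0 ≤ t → 0 ≤ f t) (hf1 : ∀ t, 0 ≤ t → f t ≤ 1) {η : ℝ} (hη : 0 < η)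
    (hz : ∀ t, 0 ≤ t → t ≤ η → f t = 0) : τ.toFun (cfcₙ f a) ≤ dTau τ a := by
  obtain ⟨n, hn⟩ := exists_nat_one_div_lt hη
  refine le_trans ?_ (le_iSup _ n)
  have hp : (0 : ℝ) < 1 / ((n : ℝ) + 1) := by positivity
  refine tau_mono τ ha hf (hz 0 le_rfl hη.le) (cutoff_continuous _) (cutoff_zero_pt hp) hf0
    (fun t ht => ?_)
  rcases le_total t η with h | h
  · rw [hz t ht h]; exact cutoff_nonneg _ _
  · rw [cutoff_eq_one hp (hn.le.trans h)]; exact hf1 t ht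

/-- Scaling of a quasitrace. -/
def QuasiTrace.scale (τ : QuasiTrace B) (r : ℝ≥0∞) (hr : r ≠ ∞) : QuasiTrace B where
  toFun a := r * τ.toFun a
  zero_of_not_nonneg a ha := by rw [τ.zero_of_not_nonneg a ha, mul_zero]
  map_zero := by rw [τ.map_zero, mul_zero]
  map_smul s a hs ha := by rw [τ.map_smul s a hs ha]; ring
  map_add_of_commute a b ha hb hab := by rw [τ.map_add_of_commute a b ha hb hab, mul_add]
  map_star_mul_self x := by rw [τ.map_star_mul_self]
  lowerSemicontinuousOn := by
    have := τ.lowerSemicontinuousOn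
    exact (ENNReal.continuous_const_mul hr).comp_lowerSemicontinuousOn this
      (fun a b h => mul_le_mul_right h r)
  finite_on_pedersen a ha h0 := ENNReal.mul_lt_top hr.lt_top (τ.finite_on_pedersen a ha h0)
  exists_matrix_extension := by
    obtain ⟨σ, h1, h2, h3, h4, h5⟩ := τ.exists_matrix_extension
    refine ⟨fun x => r * σ x, fun a => congrArg (r * ·) (h1 a), by simp [h2], fun s x hs hx => ?_,
      fun x y hx hy hxy => ?_, fun x => ?_⟩
    · simp only [h3 s x hs hx]; ring
    · simp only [h4 x y hx hy hxy, mul_add]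
    · simp only [h5 x]

theorem dTau_scale (τ : QuasiTrace B) (r : ℝ≥0∞) (hr : r ≠ ∞) (a : B) :
    dTau (τ.scale r hr) a = r * dTau τ a := by
  unfold dTau
  rw [ENNReal.mul_iSup]; rfl

end Helpers

section Stab

set_option linter.unusedSectionVars false

/-- The embedding of the corner as a star homomorphism. -/
def Stabilization.hom (SB : Stabilization A W) : A →⋆ₙₐ[ℂ] W where
  toFun := SB.emb 0 0
  map_smul' r a := by simp
  map_zero' := by simp
  map_add' a b := by simp
  map_mul' a b := by rw [SB.emb_mul]; simp
  map_star' a := (SB.emb_star 0 0 a).symm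

theorem hom_def (SB : Stabilization A W) (a : A) : SB.hom a = SB.emb 0 0 a := rfl

theorem emb_isometry (SB : Stabilization A W) (i j : ℕ) : Isometry (SB.emb i j) :=
  AddMonoidHomClass.isometry_of_norm (SB.emb i j) (SB.norm_emb i j)

theorem hom_isometry (SB : Stabilization A W) : Isometry SB.hom := emb_isometry SB 0 0

theorem hom_inj (SB : Stabilization A W) {a b : A} (h : SB.hom a = SB.hom b) : a = b :=
  (hom_isometry SB).injective h

theorem hom_norm (SB : Stabilization A W) (a : A) : ‖SB.hom a‖ = ‖a‖ := SB.norm_emb 0 0 a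

theorem hom_range_closed (SB : Stabilization A W) : IsClosed (Set.range SB.hom) :=
  (hom_isometry SB).isClosedEmbedding.isClosed_range

theorem hom_nonneg (SB : Stabilization A W) {a : A} (ha : 0 ≤ a) : 0 ≤ SB.hom a :=
  map_nonneg SB.hom ha

theorem hom_cfc (SB : Stabilization A W) {f : ℝ → ℝ} (hf : Continuous f) (hf0 : f 0 = 0) {a : A}
    (ha : star a = a) : SB.hom (cfcₙ f a) = cfcₙ f (SB.hom a) := by
  refine NonUnitalStarAlgHom.map_cfcₙ SB.hom f a hf.continuousOn hf0
    (hom_isometry SB).continuous ha ?_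
  show star _ = _
  rw [← map_star, ha]

theorem corner (SB : Stabilization A W) (s t : A) (w : W) :
    ∃ c : A, SB.hom c = SB.hom s * w * SB.hom t := by
  have hcl : IsClosed {w : W | SB.hom s * w * SB.hom t ∈ Set.range SB.hom} :=
    (hom_range_closed SB).preimage (by fun_prop)
  have hsub : (Submodule.span ℂ {w : W | ∃ (i j : ℕ) (a : A), w = SB.emb i j a} : Set W) ⊆
      {w : W | SB.hom s * w * SB.hom t ∈ Set.range SB.hom} := by
    intro w hw
    induction hw using Submodule.span_induction with
    | mem w hw =>
      obtain ⟨i, j, a, rfl⟩ := hw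
      simp only [Set.mem_ofPred_eq, hom_def, SB.emb_mul]
      split_ifs with h
      · rw [SB.emb_mul]
        split_ifs with h'
        · exact ⟨_, rfl⟩
        · exact ⟨0, by simp⟩
      · exact ⟨0, by simp⟩
    | zero => exact ⟨0, by simp⟩
    | add x y _ _ hx hy =>
      obtain ⟨c, hc⟩ := hx
      obtain ⟨d, hd⟩ := hy
      exact ⟨c + d, by rw [map_add, hc, hd]; noncomm_ring⟩
    | smul r x _ hx =>
      obtain ⟨c, hc⟩ := hx
      exact ⟨r • c, by rw [map_smul, hc, mul_smul_comm, smul_mul_assoc]⟩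
  have := closure_minimal hsub hcl (SB.dense_span w)
  exact this

/-- The algebraic ideal of `W` generated by the element `c`. -/
def genIdeal (c : W) : Set W :=
  {w | ∃ (n : ℕ) (u v : ℕ → W), w = ∑ i ∈ Finset.range n, u i * c * v i}

theorem genIdeal_add {c x y : W} (hx : x ∈ genIdeal c) (hy : y ∈ genIdeal c) :
    x + y ∈ genIdeal c := by
  obtain ⟨n, u, v, rfl⟩ := hx
  obtain ⟨m, u', v', rfl⟩ := hy
  refine ⟨n + m, fun i => if i < n then u i else u' (i - n),
    fun i => if i < n then v i else v' (i - n), ?_⟩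
  rw [Finset.sum_range_add]
  congr 1
  · refine Finset.sum_congr rfl fun i hi => ?_
    simp [Finset.mem_range.mp hi]
  · refine Finset.sum_congr rfl fun i hi => ?_
    simp

theorem genIdeal_left {c x : W} (hx : x ∈ genIdeal c) (b : W) : b * x ∈ genIdeal c := by
  obtain ⟨n, u, v, rfl⟩ := hx
  exact ⟨n, fun i => b * u i, v, by simp only [Finset.mul_sum, mul_assoc]⟩

theorem genIdeal_right {c x : W} (hx : x ∈ genIdeal c) (b : W) : x * b ∈ genIdeal c := by
  obtain ⟨n, u, v, rfl⟩ := hx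
  exact ⟨n, u, fun i => v i * b, by simp only [Finset.sum_mul, mul_assoc]⟩

theorem genIdeal_smul {c x : W} (hx : x ∈ genIdeal c) (r : ℂ) : r • x ∈ genIdeal c := by
  obtain ⟨n, u, v, rfl⟩ := hx
  exact ⟨n, fun i => r • u i, v, by simp only [Finset.smul_sum, smul_mul_assoc]⟩

theorem genIdeal_zero (c : W) : (0 : W) ∈ genIdeal c := ⟨0, 0, 0, by simp⟩

theorem genIdeal_neg {c x : W} (hx : x ∈ genIdeal c) : -x ∈ genIdeal c := by
  have := genIdeal_smul hx (-1)
  simpa using this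

theorem genIdeal_isIdeal (c : W) : IsIdealIn W Set.univ (genIdeal c) :=
  ⟨Set.subset_univ _, genIdeal_zero c, fun _ hx _ hy => genIdeal_add hx hy,
    fun _ hx => genIdeal_neg hx, fun _ hx b _ => ⟨genIdeal_right hx b, genIdeal_left hx b⟩⟩

theorem sa_mul_self_ne_zero {c : A} (hc : star c = c) (hne : c ≠ 0) : c * c ≠ 0 := by
  intro h
  have := CStarRing.norm_star_mul_self (x := c)
  rw [hc, h, norm_zero] at this
  exact hne (norm_eq_zero.mp (mul_self_eq_zero.mp this.symm))

theorem genIdeal_dense (SB : Stabilization A W) (hσ : SigmaUnital A) (hs : IsSimpleCStar A)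
    {c : A} (hc : star c = c) (hne : c ≠ 0) : Set.univ ⊆ closure (genIdeal (SB.hom c)) := by
  set J := genIdeal (SB.hom c) with hJ
  have cl_add : ∀ {x y : W}, x ∈ closure J → y ∈ closure J → x + y ∈ closure J :=
    fun hx hy => map_mem_closure₂ continuous_add hx hy (fun a ha b hb => genIdeal_add ha hb)
  have cl_neg : ∀ {x : W}, x ∈ closure J → -x ∈ closure J :=
    fun hx => map_mem_closure continuous_neg hx (fun a ha => genIdeal_neg ha)
  have cl_left : ∀ (b : W) {x : W}, x ∈ closure J → b * x ∈ closure J :=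
    fun b _ hx => map_mem_closure (continuous_const_mul b) hx (fun a ha => genIdeal_left ha b)
  have cl_right : ∀ (b : W) {x : W}, x ∈ closure J → x * b ∈ closure J :=
    fun b _ hx => map_mem_closure (f := fun x => x * b) (continuous_mul_const b) hx (fun a ha => genIdeal_right ha b)
  have cl_smul : ∀ (r : ℂ) {x : W}, x ∈ closure J → r • x ∈ closure J :=
    fun r _ hx => map_mem_closure (continuous_const_smul r) hx (fun a ha => genIdeal_smul ha r)
  have cl_zero : (0 : W) ∈ closure J := subset_closure (genIdeal_zero _)
  let I : TwoSidedIdeal A := TwoSidedIdeal.mk' {a | SB.hom a ∈ closure J}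
    (by simpa using cl_zero)
    (fun {x y} hx hy => by
      simp only [Set.mem_ofPred_eq, map_add] at *
      exact cl_add hx hy)
    (fun {x} hx => by
      simp only [Set.mem_ofPred_eq, map_neg] at *
      exact cl_neg hx)
    (fun {x y} hy => by
      simp only [Set.mem_ofPred_eq, map_mul] at *
      exact cl_left _ hy)
    (fun {x y} hx => by
      simp only [Set.mem_ofPred_eq, map_mul] at *
      exact cl_right _ hx)
  have hIc : (I : Set A) = {a | SB.hom a ∈ closure J} := TwoSidedIdeal.coe_mk' ..
  have hIcl : IsClosed (I : Set A) := by
    rw [hIc]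
    exact isClosed_closure.preimage (hom_isometry SB).continuous
  have hall : ∀ a : A, SB.hom a ∈ closure J := by
    rcases hs.2 I hIcl with h | h
    · exfalso
      have h3 : c * c * c ∈ (I : Set A) := by
        rw [hIc]
        refine subset_closure ⟨1, fun _ => SB.hom c, fun _ => SB.hom c, ?_⟩
        simp
      rw [h] at h3
      have h3' : c * c * c = 0 := h3
      have hcc := sa_mul_self_ne_zero hc hne
      have := sa_mul_self_ne_zero (c := c * c) (by rw [star_mul, hc]) hcc
      apply this
      rw [← mul_assoc, h3', zero_mul]
    · intro a
      have : a ∈ (I : Set A) := by rw [h]; trivial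
      rw [hIc] at this
      exact this
  obtain ⟨h, h0, hh⟩ := hσ
  have hemb : ∀ i j a, SB.emb i j a ∈ closure J := by
    intro i j a
    have ha : a ∈ her h := by rw [hh]; trivial
    have := map_mem_closure (t := closure J) (emb_isometry SB i j).continuous ha (by
      rintro x ⟨y, rfl⟩
      have : SB.emb i j (h * y * h) = SB.emb i 0 h * SB.hom y * SB.emb 0 j h := by
        simp [hom_def, SB.emb_mul]
      rw [this]
      exact cl_right _ (cl_left _ (hall y)))
    rwa [closure_closure] at this
  have hsub : (Submodule.span ℂ {w : W | ∃ (i j : ℕ) (a : A), w = SB.emb i j a} : Set W) ⊆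
      closure J := by
    intro w hw
    induction hw using Submodule.span_induction with
    | mem w hw =>
      obtain ⟨i, j, a, rfl⟩ := hw
      exact hemb i j a
    | zero => exact cl_zero
    | add x y _ _ hx hy => exact cl_add hx hy
    | smul r x _ hx => exact cl_smul r hx
  intro w _
  exact closure_minimal hsub isClosed_closure (SB.dense_span w)

theorem tau_diag (SB : Stabilization A W) (τ : QuasiTrace W) {q : A} (hq : star q = q) (n : ℕ) :
    τ.toFun (∑ i ∈ Finset.range n, SB.emb i i (q * q)) = n * τ.toFun (SB.hom (q * q)) := by
  have hpos : ∀ i, 0 ≤ SB.emb i i (q * q) := by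
    intro i
    have : SB.emb i i (q * q) = star (SB.emb i i q) * SB.emb i i q := by
      rw [SB.emb_star, SB.emb_mul, hq]; simp
    rw [this]
    exact star_mul_self_nonneg _
  have heq : ∀ i, τ.toFun (SB.emb i i (q * q)) = τ.toFun (SB.hom (q * q)) := by
    intro i
    have h1 : SB.emb i i (q * q) = SB.emb i 0 q * star (SB.emb i 0 q) := by
      rw [SB.emb_star, SB.emb_mul, hq]; simp
    have h2 : SB.hom (q * q) = star (SB.emb i 0 q) * SB.emb i 0 q := by
      rw [SB.emb_star, SB.emb_mul, hq]; simp [hom_def]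
    rw [h1, h2, τ.map_star_mul_self]
  induction n with
  | zero => simp [τ.map_zero]
  | succ n ih =>
    rw [Finset.sum_range_succ, τ.map_add_of_commute _ _ (Finset.sum_nonneg fun i _ => hpos i)
      (hpos n), ih, heq n]
    · push_cast; ring
    · rw [Finset.sum_mul, Finset.mul_sum, Finset.sum_eq_zero, Finset.sum_eq_zero]
      · intro i hi
        rw [SB.emb_mul, if_neg (by have := Finset.mem_range.mp hi; omega)]
      · intro i hi
        rw [SB.emb_mul, if_neg (by have := Finset.mem_range.mp hi; omega)]

theorem tau_bound (SB : Stabilization A W) (hσ : SigmaUnital A) (hs : IsSimpleCStar A)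
    {u : A} (hu : star u = u) (hne : u ≠ 0) {b : W} (hb : b ∈ pedersen W) (hbs : star b = b) :
    ∃ C : ℝ≥0∞, C ≠ ∞ ∧ ∀ τ : QuasiTrace W, τ.toFun (b * b) ≤ C * dTau τ (SB.hom (u * u)) := by
  have huu : 0 ≤ u * u := by
    have := star_mul_self_nonneg u
    rwa [hu] at this
  have hn : 0 < ‖u * u‖ := norm_pos_iff.mpr (sa_mul_self_ne_zero hu hne)
  set ε := ‖u * u‖ / 2 with hε
  have hε0 : 0 < ε := by positivity
  set c1 := cfcₙ (cutoff (2 * ε)) (u * u) with hc1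
  set c2 := cfcₙ (cutoff ε) (u * u) with hc2
  have hc1ne : c1 ≠ 0 := cfc_cutoff_ne_zero huu (by positivity) (by rw [hε]; linarith)
  have hc1s : star c1 = c1 := cfc_sa _ _
  have hc2s : star c2 = c2 := cfc_sa _ _
  have hc21 : c2 * c1 = c1 := by
    refine cfc_mul_eq huu (cutoff_continuous _) (cutoff_zero_pt hε0) (cutoff_continuous _)
      (cutoff_zero_pt (by positivity)) (fun t ht => ?_)
    rcases le_total t ε with h | h
    · rw [cutoff_eq_zero (ε := 2 * ε) (by positivity) (by linarith), mul_zero]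
    · rw [cutoff_eq_one hε0 h, one_mul]
  have hdense := genIdeal_dense SB hσ hs (c := c1 * c1) (by rw [star_mul, hc1s])
    (sa_mul_self_ne_zero hc1s hc1ne)
  have hbJ : b ∈ genIdeal (SB.hom (c1 * c1)) :=
    Set.mem_iInter₂.mp hb _ ⟨genIdeal_isIdeal _, hdense⟩
  obtain ⟨n, U, V, hbe⟩ := hbJ
  set w1 := ∑ i ∈ Finset.range n, U i * SB.emb 0 i c1 with hw1
  set w2 := ∑ i ∈ Finset.range n, SB.emb i 0 c1 * V i with hw2
  have hw12 : b = w1 * w2 := by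
    rw [hbe, hw1, hw2, Finset.sum_mul]
    refine Finset.sum_congr rfl fun i hi => ?_
    rw [Finset.mul_sum, Finset.sum_eq_single i]
    · have : SB.hom (c1 * c1) = SB.emb 0 i c1 * SB.emb i 0 c1 := by
        rw [SB.emb_mul]; simp [hom_def]
      rw [this]; noncomm_ring
    · intro j _ hj
      have : SB.emb 0 i c1 * SB.emb j 0 c1 = 0 := by
        rw [SB.emb_mul, if_neg hj.symm]
      calc U i * SB.emb 0 i c1 * (SB.emb j 0 c1 * V j)
          = U i * (SB.emb 0 i c1 * SB.emb j 0 c1) * V j := by noncomm_ring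
        _ = 0 := by rw [this]; simp
    · intro h; exact absurd hi h
  set E := ∑ i ∈ Finset.range n, SB.emb i i c2 with hE
  have hEs : star E = E := by
    rw [hE, star_sum]
    exact Finset.sum_congr rfl fun i _ => by rw [SB.emb_star, hc2s]
  have hEmul : ∀ (a : A) (j : ℕ), ∀ i ∈ Finset.range n, E * SB.emb i j a = SB.emb i j (c2 * a) := by
    intro a j i hi
    rw [hE, Finset.sum_mul, Finset.sum_eq_single i]
    · rw [SB.emb_mul]; simp
    · intro k _ hk
      rw [SB.emb_mul, if_neg hk]
    · intro h; exact absurd hi h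
  have hEw1 : E * star w1 = star w1 := by
    rw [hw1, star_sum, Finset.mul_sum]
    refine Finset.sum_congr rfl fun i hi => ?_
    rw [star_mul, SB.emb_star, ← mul_assoc, hc1s, hEmul _ _ i hi, hc21]
  have hEE : E * E = ∑ i ∈ Finset.range n, SB.emb i i (c2 * c2) := by
    conv_lhs => rw [show E * E = E * ∑ i ∈ Finset.range n, SB.emb i i c2 from rfl, Finset.mul_sum]
    exact Finset.sum_congr rfl fun i hi => hEmul _ _ i hi
  set P := CFC.sqrt (star w1 * w1) with hP
  have hPP : P * P = star w1 * w1 := CFC.sqrt_mul_sqrt_self _ (star_mul_self_nonneg _)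
  have hPs : star P = P := (IsSelfAdjoint.of_nonneg (CFC.sqrt_nonneg _)).star_eq
  have hEPP : E * (P * P) = P * P := by rw [hPP, ← mul_assoc, hEw1]
  have hPPE : P * P * E = P * P := by
    have := congrArg star hEPP
    simpa [star_mul, hPs, hEs] using this
  have hEP : E * P = P := by
    have h1 : (E * P - P) * star (E * P - P) = 0 := by
      rw [star_sub, star_mul, hPs, hEs]
      calc (E * P - P) * (P * E - P)
          = E * (P * P) * E - E * (P * P) - P * P * E + P * P := by noncomm_ring
        _ = 0 := by rw [hEPP, hPPE]; abel
    exact sub_eq_zero.mp (CStarRing.mul_star_self_eq_zero_iff _ |>.mp h1)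
  set Y := P * w2 with hY
  have hbb : b * b = star Y * Y := by
    have : b * b = star b * b := by rw [hbs]
    rw [this, hw12, hY, star_mul, star_mul, hPs]
    calc star w2 * star w1 * (w1 * w2) = star w2 * (star w1 * w1) * w2 := by noncomm_ring
      _ = _ := by rw [← hPP]; noncomm_ring
  refine ⟨ENNReal.ofReal ‖Y * star Y‖ * n, ENNReal.mul_ne_top ENNReal.ofReal_ne_top (by simp),
    fun τ => ?_⟩
  rw [hbb, τ.map_star_mul_self]
  refine (tau_le_unit τ hEs (mul_star_self_nonneg Y) (by
    rw [hY, ← mul_assoc, ← mul_assoc, hEP])).trans ?_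
  rw [hEE, tau_diag SB τ hc2s, ← mul_assoc (ENNReal.ofReal _)]
  gcongr
  have : c2 * c2 = cfcₙ (fun t => cutoff ε t * cutoff ε t) (u * u) :=
    cfc_mul_eq huu (cutoff_continuous _) (cutoff_zero_pt hε0) (cutoff_continuous _)
      (cutoff_zero_pt hε0) (fun t _ => rfl)
  have hcc : Continuous (fun t => cutoff ε t * cutoff ε t) :=
    (cutoff_continuous _).mul (cutoff_continuous _)
  rw [this, hom_cfc SB hcc
    (by simp [cutoff_zero_pt hε0]) (by rw [star_mul, hu])]
  refine dTau_le_cfc τ (hom_nonneg SB huu) hcc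
    (fun t _ => mul_nonneg (cutoff_nonneg _ _) (cutoff_nonneg _ _))
    (fun t _ => mul_le_one₀ (cutoff_le_one _ _) (cutoff_nonneg _ _) (cutoff_le_one _ _))
    (η := ε / 2) (by positivity) (fun t _ ht => by rw [cutoff_eq_zero hε0 ht, zero_mul])

/-- Nonzero quasitraces are faithful on the corner. -/
theorem dTau_pos (SB : Stabilization A W) (hσ : SigmaUnital A) (hs : IsSimpleCStar A)
    {u : A} (hu : star u = u) (hne : u ≠ 0) (τ : QuasiTrace W) (hτ : ¬ τ.IsZero) :
    0 < dTau τ (SB.hom (u * u)) := by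
  rw [pos_iff_ne_zero]
  intro h0
  apply hτ
  intro a
  by_cases ha : 0 ≤ a
  swap
  · exact τ.zero_of_not_nonneg a ha
  have hcont : ∀ n : ℕ, Continuous (fun t => Real.sqrt t * cutoff (1 / ((n : ℝ) + 1)) t) :=
    fun n => Real.continuous_sqrt.mul (cutoff_continuous _)
  let b : ℕ → W := fun n => cfcₙ (fun t => Real.sqrt t * cutoff (1 / ((n : ℝ) + 1)) t) a
  have hp : ∀ n : ℕ, (0 : ℝ) < 1 / ((n : ℝ) + 1) := fun n => by positivity
  have hb0 : ∀ n, τ.toFun (b n * b n) = 0 := by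
    intro n
    obtain ⟨C, hC, h⟩ := tau_bound SB hσ hs hu hne (b := b n)
      (cfc_mem_pedersen ha (hcont n) (δ := 1 / ((n : ℝ) + 1) / 2) (by have := hp n; positivity)
        (fun t _ ht => by rw [cutoff_eq_zero (hp n) ht, mul_zero])) (cfc_sa _ _)
    have := h τ
    rw [h0, mul_zero] at this
    exact le_antisymm this zero_le
  have hlim : Tendsto (fun n => b n * b n) atTop (𝓝 a) := by
    rw [tendsto_iff_norm_sub_tendsto_zero]
    refine squeeze_zero (fun _ => norm_nonneg _) (fun n => ?_)
      tendsto_one_div_add_atTop_nhds_zero_nat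
    have h1 : b n * b n = cfcₙ (fun t => t * (cutoff (1 / ((n : ℝ) + 1)) t) ^ 2) a := by
      refine cfc_mul_eq ha (hcont n) (by simp) (hcont n) (by simp) (fun t ht => ?_)
      nlinarith [Real.mul_self_sqrt ht]
    have h2 : a = cfcₙ (fun t : ℝ => t) a := (cfcₙ_id' ℝ a (IsSelfAdjoint.of_nonneg ha)).symm
    rw [h1]
    nth_rw 2 [h2]
    rw [← cfcₙ_sub _ _ a (by have := cutoff_continuous (1 / ((n : ℝ) + 1)); fun_prop) (by simp)
      (by fun_prop) rfl]
    refine cfc_norm_le ha fun t ht => ?_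
    have c0 := cutoff_nonneg (1 / ((n : ℝ) + 1)) t
    have c1 := cutoff_le_one (1 / ((n : ℝ) + 1)) t
    rcases le_total t (1 / ((n : ℝ) + 1)) with h | h
    · rw [abs_le]
      constructor <;> nlinarith [mul_nonneg ht (sq_nonneg (cutoff (1 / ((n : ℝ) + 1)) t)),
        mul_nonneg ht (by nlinarith : 0 ≤ 1 - (cutoff (1 / ((n : ℝ) + 1)) t) ^ 2)]
    · rw [cutoff_eq_one (hp n) h]; simpa using (hp n).le
  by_contra hne0
  have hpos : 0 < τ.toFun a := pos_iff_ne_zero.mpr hne0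
  have hls := τ.lowerSemicontinuousOn a ha 0 hpos
  have hev : Tendsto (fun n => b n * b n) atTop (𝓝[{a : W | 0 ≤ a}] a) := by
    refine tendsto_nhdsWithin_iff.mpr ⟨hlim, Eventually.of_forall fun n => ?_⟩
    have := star_mul_self_nonneg (b n)
    rwa [show star (b n) = b n from cfc_sa _ _] at this
  obtain ⟨n, hn⟩ := (hev.eventually hls).exists
  rw [hb0 n] at hn
  exact lt_irrefl _ hn

end Stab

section Comparison

set_option linter.unusedSectionVars false

theorem exists_units (SB : Stabilization A W) (hσ : SigmaUnital A) (hs : IsSimpleCStar A) :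
    ∃ e e1 : A, 0 ≤ e ∧ e ≠ 0 ∧ e ∈ pedersen A ∧ star e1 = e1 ∧ e1 * e = e ∧
      e1 ∈ pedersen A ∧ SB.hom e1 ∈ pedersen W := by
  obtain ⟨h, h0, hh⟩ := hσ
  have hne : h ≠ 0 := by
    rintro rfl
    obtain ⟨x, hx⟩ := hs.1
    have : x ∈ her (0 : A) := by rw [hh]; trivial
    unfold her at this
    simp at this
    exact hx this
  have hδ : 0 < ‖h‖ := norm_pos_iff.mpr hne
  have hδ2 : 0 < ‖h‖ / 2 := by positivity
  refine ⟨cfcₙ (cutoff ‖h‖) h, cfcₙ (cutoff (‖h‖ / 2)) h,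
    cfc_nonneg' h0 fun t _ => cutoff_nonneg _ _, cfc_cutoff_ne_zero h0 hδ le_rfl,
    cfc_mem_pedersen h0 (cutoff_continuous _) hδ2 (fun t _ ht => cutoff_eq_zero hδ ht),
    cfc_sa _ _, ?_,
    cfc_mem_pedersen h0 (cutoff_continuous _) (δ := ‖h‖ / 2 / 2) (by positivity)
      (fun t _ ht => cutoff_eq_zero hδ2 ht), ?_⟩
  · refine cfc_mul_eq h0 (cutoff_continuous _) (cutoff_zero_pt hδ2) (cutoff_continuous _)
      (cutoff_zero_pt hδ) (fun t _ => ?_)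
    rcases le_total t (‖h‖ / 2) with ht | ht
    · rw [cutoff_eq_zero hδ ht, mul_zero]
    · rw [cutoff_eq_one hδ2 ht, one_mul]
  · rw [hom_cfc SB (cutoff_continuous _) (cutoff_zero_pt hδ2) (IsSelfAdjoint.of_nonneg h0).star_eq]
    exact cfc_mem_pedersen (hom_nonneg SB h0) (cutoff_continuous _) (δ := ‖h‖ / 2 / 2)
      (by positivity) (fun t _ ht => cutoff_eq_zero hδ2 ht)

theorem her_unit (SB : Stabilization A W) {e e1 : A} (h : e1 * e = e) {a : W}
    (ha : a ∈ her (SB.hom e)) : SB.hom e1 * a = a := by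
  have hcl : IsClosed {a : W | SB.hom e1 * a = a} := isClosed_eq (by fun_prop) continuous_id
  refine closure_minimal ?_ hcl ha
  rintro _ ⟨y, rfl⟩
  show SB.hom e1 * (SB.hom e * y * SB.hom e) = _
  rw [← mul_assoc, ← mul_assoc, ← map_mul, h]

theorem tau_her_le (SB : Stabilization A W) {e e1 : A} (h1 : star e1 = e1) (h : e1 * e = e)
    (τ : QuasiTrace W) : (⨆ a : {a : W // a ∈ her (SB.hom e) ∧ 0 ≤ a ∧ ‖a‖ ≤ 1}, τ.toFun a) ≤
      τ.toFun (SB.hom e1 * SB.hom e1) := by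
  refine iSup_le ?_
  rintro ⟨a, ha, ha0, ha1⟩
  refine (tau_le_unit τ (E := SB.hom e1) (by rw [← map_star, h1]) ha0 (her_unit SB h ha)).trans ?_
  calc _ ≤ 1 * τ.toFun (SB.hom e1 * SB.hom e1) := by
        gcongr
        exact ENNReal.ofReal_le_one.mpr ha1
    _ = _ := one_mul _

theorem pedersen_mul {b : W} (hb : b ∈ pedersen W) (c : W) : b * c ∈ pedersen W := by
  refine Set.mem_iInter₂.mpr fun J hJ => ?_
  exact (hJ.1.2.2.2.2 b (Set.mem_iInter₂.mp hb J hJ) c trivial).1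

theorem exists_normalized (SB : Stabilization A W) (hσ : SigmaUnital A) (hs : IsSimpleCStar A)
    {e e1 : A} (he : 0 ≤ e) (hne : e ≠ 0) (h1 : star e1 = e1) (h : e1 * e = e)
    (hp : SB.hom e1 ∈ pedersen W) (τ : QuasiTrace W) (hτ : ¬ τ.IsZero) :
    ∃ (r : ℝ≥0∞) (hr : r ≠ ∞), τ.scale r hr ∈ QTSetHer (SB.hom e) := by
  have hes : star e = e := (IsSelfAdjoint.of_nonneg he).star_eq
  set N := ⨆ a : {a : W // a ∈ her (SB.hom e) ∧ 0 ≤ a ∧ ‖a‖ ≤ 1}, τ.toFun a with hN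
  have hNt : N ≠ ∞ := by
    refine ((tau_her_le SB h1 h τ).trans_lt ?_).ne
    refine τ.finite_on_pedersen _ (pedersen_mul hp _) ?_
    have := star_mul_self_nonneg (SB.hom e1)
    rwa [← map_star, h1] at this
  have hN0 : N ≠ 0 := by
    have hd := dTau_pos SB hσ hs hes hne τ hτ
    unfold dTau at hd
    obtain ⟨n, hn⟩ := lt_iSup_iff.mp hd
    have hee : 0 ≤ SB.hom (e * e) := by
      have := star_mul_self_nonneg e
      rw [hes] at this
      exact hom_nonneg SB this
    have hpos : (0 : ℝ) < 1 / ((n : ℝ) + 1) := by positivity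
    have hcom : Commute (SB.hom e) (cfcₙ (kfun (1 / ((n : ℝ) + 1))) (SB.hom (e * e))) := by
      have : Commute (SB.hom (e * e)) (SB.hom e) := by
        rw [map_mul]; exact (Commute.refl _).mul_left (Commute.refl _)
      exact (this.cfcₙ_real _).symm
    have hf : fEps (1 / ((n : ℝ) + 1)) (SB.hom (e * e)) =
        SB.hom e * cfcₙ (kfun (1 / ((n : ℝ) + 1))) (SB.hom (e * e)) * SB.hom e := by
      rw [hcom.eq, mul_assoc, ← map_mul]
      exact (cfc_mul_id hee (kfun_continuous hpos) (kfun_zero hpos)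
        (fun t _ => kfun_mul hpos t)).symm
    refine (hn.trans_le (le_iSup (fun a : {a : W // a ∈ her (SB.hom e) ∧ 0 ≤ a ∧ ‖a‖ ≤ 1} =>
      τ.toFun a) ⟨fEps (1 / ((n : ℝ) + 1)) (SB.hom (e * e)), ?_, ?_, ?_⟩)).ne'
    · rw [hf]; exact subset_closure ⟨_, rfl⟩
    · exact cfc_nonneg' hee fun t _ => cutoff_nonneg _ _
    · exact cfc_norm_le hee fun t _ => by
        rw [abs_of_nonneg (cutoff_nonneg _ _)]; exact cutoff_le_one _ _
  refine ⟨N⁻¹, ENNReal.inv_ne_top.mpr hN0, ?_⟩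
  show (⨆ a : {a : W // a ∈ her (SB.hom e) ∧ 0 ≤ a ∧ ‖a‖ ≤ 1}, N⁻¹ * τ.toFun a) = 1
  rw [← ENNReal.mul_iSup]
  exact ENNReal.inv_mul_cancel hN0 hNt

theorem comparison (SB : Stabilization A W) (hσ : SigmaUnital A) (hs : IsSimpleCStar A)
    (hsc : StrictComparison W) {e e1 : A} (he : 0 ≤ e) (hne : e ≠ 0) (h1 : star e1 = e1)
    (h : e1 * e = e) (hp : SB.hom e1 ∈ pedersen W) {a : W} (ha : 0 ≤ a)
    (hfin : ∀ τ : QuasiTrace W, dTau τ a < ∞)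
    (hω : omegaOn (closure (QTSetHer (SB.hom e))) a = 0) {u : A} (hu : star u = u) (hu0 : u ≠ 0) :
    ∃ δ : ℝ, 0 < δ ∧ ∀ (p : ℝ → ℝ) (η : ℝ), Continuous p → (∀ t, 0 ≤ p t) → 0 < η →
      (∀ t, 0 ≤ t → t ≤ η → p t = 0) → (∀ t, δ ≤ t → p t = 0) →
      CuntzLE (cfcₙ p a) (SB.hom (u * u)) := by
  obtain ⟨C, hC, hCb⟩ := tau_bound SB hσ hs hu hu0 hp (by rw [← map_star, h1])
  have hlt : omegaOn (closure (QTSetHer (SB.hom e))) a < C⁻¹ := by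
    rw [hω]; exact ENNReal.inv_pos.mpr hC
  obtain ⟨n, hn⟩ := iInf_lt_iff.mp hlt
  have hpos : (0 : ℝ) < 1 / ((n : ℝ) + 1) := by positivity
  have huu : 0 ≤ SB.hom (u * u) := by
    have := star_mul_self_nonneg u
    rw [hu] at this
    exact hom_nonneg SB this
  refine ⟨1 / ((n : ℝ) + 1) / 2, by positivity, fun p η hpc hp0 hη hpz hpδ => ?_⟩
  have hp00 : p 0 = 0 := hpz 0 le_rfl hη.le
  refine hsc _ _ (cfc_nonneg' ha fun t _ => hp0 t) huu fun τ hτ => ?_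
  obtain ⟨r, hr, hmem⟩ := exists_normalized SB hσ hs he hne h1 h hp τ hτ
  set τ' := τ.scale r hr with hτ'
  have key : dTau τ' (cfcₙ p a) < dTau τ' (SB.hom (u * u)) := by
    have b1 : C⁻¹ ≤ dTau τ' (SB.hom (u * u)) := by
      have h2 : (1 : ℝ≥0∞) ≤ τ'.toFun (SB.hom e1 * SB.hom e1) := by
        have h3 := tau_her_le SB h1 h τ'
        have h4 : (⨆ a : {a : W // a ∈ her (SB.hom e) ∧ 0 ≤ a ∧ ‖a‖ ≤ 1}, τ'.toFun a) = 1 := hmem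
        rwa [h4] at h3
      have h5 := h2.trans (hCb τ')
      rcases eq_or_ne C 0 with rfl | hC0
      · simp at h5
      · calc C⁻¹ = C⁻¹ * 1 := (mul_one _).symm
          _ ≤ C⁻¹ * (C * dTau τ' (SB.hom (u * u))) := by gcongr
          _ = _ := by rw [← mul_assoc, ENNReal.inv_mul_cancel hC0 hC, one_mul]
    refine lt_of_lt_of_le ?_ b1
    have b2 : dTau τ' a - τ'.toFun (fEps (1 / ((n : ℝ) + 1)) a) < C⁻¹ := by
      refine lt_of_le_of_lt ?_ hn
      exact le_iSup₂ (f := fun (τ : QuasiTrace W) (_ : τ ∈ closure (QTSetHer (SB.hom e))) =>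
        dTau τ a - τ.toFun (fEps (1 / ((n : ℝ) + 1)) a)) τ' (subset_closure hmem)
    refine lt_of_le_of_lt ?_ b2
    have b3 : τ'.toFun (fEps (1 / ((n : ℝ) + 1)) a) ≤ dTau τ' a :=
      le_iSup (fun n : ℕ => τ'.toFun (fEps (1 / ((n : ℝ) + 1)) a)) n
    refine ENNReal.le_sub_of_add_le_right (b3.trans_lt (hfin τ')).ne ?_
    unfold dTau
    rw [ENNReal.iSup_add]
    refine iSup_le fun m => ?_
    have hm : (0 : ℝ) < 1 / ((m : ℝ) + 1) := by positivity
    have hcomp : fEps (1 / ((m : ℝ) + 1)) (cfcₙ p a) =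
        cfcₙ (fun t => cutoff (1 / ((m : ℝ) + 1)) (p t)) a := by
      unfold fEps
      rw [cfcₙ_comp' (cutoff (1 / ((m : ℝ) + 1))) p a (cutoff_continuous _).continuousOn
        (cutoff_zero_pt hm) hpc.continuousOn hp00 (IsSelfAdjoint.of_nonneg ha)]
    rw [hcomp]
    unfold fEps
    have hcc : Continuous (fun t => cutoff (1 / ((m : ℝ) + 1)) (p t)) :=
      (cutoff_continuous _).comp hpc
    rw [← tau_add τ' ha hcc
      (by show cutoff _ (p 0) = 0; rw [hp00]; exact cutoff_zero_pt hm)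
      (cutoff_continuous _) (cutoff_zero_pt hpos) (fun t _ => cutoff_nonneg _ _)
      (fun t _ => cutoff_nonneg _ _)]
    refine dTau_le_cfc τ' ha (hcc.add (cutoff_continuous _)) (fun t _ => add_nonneg
      (cutoff_nonneg _ _) (cutoff_nonneg _ _)) (fun t _ => ?_)
      (η := min η (1 / ((n : ℝ) + 1) / 2)) (lt_min hη (by positivity)) (fun t ht0 ht => ?_)
    · rcases le_total t (1 / ((n : ℝ) + 1) / 2) with ht | ht
      · show _ + cutoff (1 / ((n : ℝ) + 1)) t ≤ 1
        rw [cutoff_eq_zero hpos ht, add_zero]; exact cutoff_le_one _ _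
      · show cutoff _ (p t) + _ ≤ 1
        rw [hpδ t ht, cutoff_zero_pt hm, zero_add]; exact cutoff_le_one _ _
    · show cutoff _ (p t) + cutoff (1 / ((n : ℝ) + 1)) t = 0
      rw [cutoff_eq_zero hpos (ht.trans (min_le_right _ _)), hpz t ht0 (ht.trans (min_le_left _ _)),
        cutoff_zero_pt hm, add_zero]
  rw [hτ', dTau_scale, dTau_scale] at key
  exact lt_of_mul_lt_mul_left' key

/-- Trapezoid function. -/
def trap (η θ : ℝ) : ℝ → ℝ := fun t => cutoff η t - cutoff (4 * θ) t

theorem trap_continuous (η θ : ℝ) : Continuous (trap η θ) :=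
  (cutoff_continuous _).sub (cutoff_continuous _)

theorem trap_nonneg {η θ : ℝ} (hη : 0 < η) (h : η ≤ 2 * θ) (t : ℝ) : 0 ≤ trap η θ t := by
  unfold trap
  rcases le_total 0 t with ht | ht
  · exact sub_nonneg.mpr (cutoff_anti hη (by linarith) ht)
  · rw [cutoff_eq_zero hη (by linarith), cutoff_eq_zero (by linarith) (by linarith), sub_zero]

theorem trap_le_one (η θ t : ℝ) : trap η θ t ≤ 1 := by
  unfold trap
  linarith [cutoff_le_one η t, cutoff_nonneg (4 * θ) t]

theorem trap_zero_left {η θ t : ℝ} (hη : 0 < η) (h : η ≤ 2 * θ) (ht : t ≤ η / 2) :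
    trap η θ t = 0 := by
  unfold trap
  rw [cutoff_eq_zero hη ht, cutoff_eq_zero (by linarith) (by linarith), sub_zero]

theorem trap_zero_right {η θ t : ℝ} (hη : 0 < η) (h : η ≤ 2 * θ) (ht : 4 * θ ≤ t) :
    trap η θ t = 0 := by
  unfold trap
  rw [cutoff_eq_one hη (by linarith), cutoff_eq_one (by linarith) ht, sub_self]

theorem trap_one {η θ t : ℝ} (hη : 0 < η) (h : η ≤ 2 * θ) (ht : η ≤ t) (ht' : t ≤ 2 * θ) :
    trap η θ t = 1 := by
  unfold trap
  rw [cutoff_eq_one hη ht, cutoff_eq_zero (by linarith) (by linarith), sub_zero]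

/-- The output of the comparison lemma for a trapezoid. -/
theorem comparison_trap (SB : Stabilization A W) {a : W} {u : A} (hu : star u = u) {δ : ℝ}
    (hδ : ∀ (p : ℝ → ℝ) (η : ℝ), Continuous p → (∀ t, 0 ≤ p t) → 0 < η →
      (∀ t, 0 ≤ t → t ≤ η → p t = 0) → (∀ t, δ ≤ t → p t = 0) →
      CuntzLE (cfcₙ p a) (SB.hom (u * u))) {η θ : ℝ} (hη : 0 < η) (h : η ≤ 2 * θ) (hθ : 4 * θ ≤ δ)
    {ε : ℝ} (hε : 0 < ε) :
    ∃ r : W, ‖cfcₙ (trap η θ) a - star (SB.hom u * r) * (SB.hom u * r)‖ ≤ ε := by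
  obtain ⟨x, hx⟩ := hδ (trap η θ) (η / 2) (trap_continuous _ _) (trap_nonneg hη h) (by positivity)
    (fun t _ ht => trap_zero_left hη h ht) (fun t ht => trap_zero_right hη h (hθ.trans ht))
  obtain ⟨n, hn⟩ := (hx.eventually (gt_mem_nhds hε)).exists
  refine ⟨x n, ?_⟩
  have : star (SB.hom u * x n) * (SB.hom u * x n) = star (x n) * SB.hom (u * u) * x n := by
    rw [star_mul, ← map_star, hu, map_mul]
    noncomm_ring
  rw [this]
  exact hn.le

end Comparison

section Split

set_option linter.unusedSectionVars false

/-- The conclusion of the comparison lemma. -/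
def Comp (SB : Stabilization A W) (a : W) : Prop :=
  ∀ u : A, star u = u → u ≠ 0 → ∃ δ : ℝ, 0 < δ ∧ ∀ (p : ℝ → ℝ) (η : ℝ), Continuous p →
      (∀ t, 0 ≤ p t) → 0 < η →
      (∀ t, 0 ≤ t → t ≤ η → p t = 0) → (∀ t, δ ≤ t → p t = 0) →
      CuntzLE (cfcₙ p a) (SB.hom (u * u))

theorem hom_reflect_nonneg (SB : Stabilization A W) {g : A} (hg : 0 ≤ SB.hom g) : 0 ≤ g := by
  have hgs : star g = g := hom_inj SB (by
    rw [map_star]; exact (IsSelfAdjoint.of_nonneg hg).star_eq)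
  have h1 : g = cfcₙ (fun t : ℝ => |t|) g := by
    apply hom_inj SB
    rw [hom_cfc SB continuous_abs abs_zero hgs]
    conv_lhs => rw [← cfcₙ_id' ℝ (SB.hom g) (IsSelfAdjoint.of_nonneg hg)]
    exact cfcₙ_congr fun t ht => (abs_of_nonneg (quasispectrum_nonneg_of_nonneg _ hg t ht)).symm
  rw [h1]
  exact cfcₙ_nonneg fun t _ => abs_nonneg t

/-- Tent function around `s`. -/
def tent (s : ℝ) : ℝ → ℝ := fun t => max 0 (1 - |2 * t / s - 2|)

theorem tent_continuous (s : ℝ) : Continuous (tent s) := by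
  unfold tent; fun_prop

theorem tent_zero (s : ℝ) : tent s 0 = 0 := by simp [tent]

theorem tent_self {s : ℝ} (hs : 0 < s) : tent s s = 1 := by
  unfold tent
  have : 2 * s / s - 2 = 0 := by field_simp; norm_num
  rw [this]; simp

theorem tent_nonneg (s t : ℝ) : 0 ≤ tent s t := le_max_left _ _

theorem tent_le_one (s t : ℝ) : tent s t ≤ 1 :=
  max_le zero_le_one (by linarith [abs_nonneg (2 * t / s - 2)])

theorem tent_left {s t : ℝ} (hs : 0 < s) (h : t ≤ s / 2) : tent s t = 0 := by
  unfold tent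
  have h1 : 2 * t / s ≤ 1 := by rw [div_le_one hs]; linarith
  rw [max_eq_left]
  linarith [neg_abs_le (2 * t / s - 2)]

theorem tent_right {s t : ℝ} (hs : 0 < s) (h : 3 * s / 2 ≤ t) : tent s t = 0 := by
  unfold tent
  have h1 : 3 ≤ 2 * t / s := by rw [le_div_iff₀ hs]; linarith
  rw [max_eq_left]
  linarith [le_abs_self (2 * t / s - 2)]

theorem tent_norm {a : W} (ha : 0 ≤ a) {s : ℝ} (hs : 0 < s) (hm : s ∈ quasispectrum ℝ a) :
    ‖cfcₙ (tent s) a‖ = 1 := by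
  apply le_antisymm
  · exact cfc_norm_le ha fun t _ => by rw [abs_of_nonneg (tent_nonneg _ _)]; exact tent_le_one _ _
  · have := norm_apply_le_norm_cfcₙ (tent s) a hm (tent_continuous s).continuousOn (tent_zero s)
      (IsSelfAdjoint.of_nonneg ha)
    rwa [tent_self hs, norm_one] at this

theorem norm_RB {R B p d : W} (hR : star R * R = p - d) (hB : star B = B) (hB1 : ‖B‖ = 1)
    (hpB : p * B = B) (hd : ‖d‖ ≤ 1 / 100) : 99 / 100 ≤ ‖R * B‖ * ‖R * B‖ := by
  rw [← CStarRing.norm_star_mul_self]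
  have h1 : star (R * B) * (R * B) = star B * B - B * d * B := by
    rw [star_mul, hB]
    calc B * star R * (R * B) = B * (star R * R) * B := by noncomm_ring
      _ = B * (p * B) - B * d * B := by rw [hR]; noncomm_ring
      _ = _ := by rw [hpB]
  rw [h1]
  have h2 : ‖star B * B‖ = 1 := by rw [CStarRing.norm_star_mul_self, hB1, mul_one]
  have h3 : ‖B * d * B‖ ≤ 1 / 100 := by
    calc ‖B * d * B‖ ≤ ‖B‖ * ‖d‖ * ‖B‖ := norm_mul₃_le
      _ ≤ _ := by rw [hB1]; linarith
  have h4 := norm_sub_norm_le (star B * B) (B * d * B)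
  linarith

theorem split (SB : Stabilization A W) {a : W} (ha : 0 ≤ a) (hC : Comp SB a)
    (hacc : ∀ δ : ℝ, 0 < δ → ∃ t ∈ quasispectrum ℝ a, 0 < t ∧ t ≤ δ) {e : A} (he : star e = e)
    (hne : e ≠ 0) : ∃ u v : A, star u = u ∧ u ≠ 0 ∧ star v = v ∧ v ≠ 0 ∧ u * v = 0 ∧
      ∀ w : A, w * e = 0 → w * u = 0 ∧ w * v = 0 := by
  obtain ⟨δ, hδ0, hδ⟩ := hC e he hne
  obtain ⟨s1, hs1, hs10, hs1δ⟩ := hacc (δ / 4) (by positivity)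
  obtain ⟨s2, hs2, hs20, hs21⟩ := hacc (s1 / 3) (by positivity)
  have hηθ : s2 / 2 ≤ 2 * s1 := by linarith
  have hη : 0 < s2 / 2 := by positivity
  obtain ⟨r, hr⟩ := comparison_trap SB he hδ hη hηθ (by linarith) (ε := 1 / 100) (by norm_num)
  set p := cfcₙ (trap (s2 / 2) s1) a with hp
  set R := SB.hom e * r with hR
  set d := p - star R * R with hd
  have hRR : star R * R = p - d := by rw [hd]; abel
  set B1 := cfcₙ (tent s1) a with hB1
  set B2 := cfcₙ (tent s2) a with hB2
  have hB1s : star B1 = B1 := cfc_sa _ _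
  have hB2s : star B2 = B2 := cfc_sa _ _
  have hn1 : ‖B1‖ = 1 := tent_norm ha hs10 hs1
  have hn2 : ‖B2‖ = 1 := tent_norm ha hs20 hs2
  have htz : trap (s2 / 2) s1 0 = 0 := trap_zero_left hη hηθ (by positivity)
  have hpB1 : p * B1 = B1 := by
    refine cfc_mul_eq ha (trap_continuous _ _) htz (tent_continuous _) (tent_zero _) fun t _ => ?_
    rcases le_total t (s1 / 2) with h | h
    · rw [tent_left hs10 h, mul_zero]
    rcases le_total (3 * s1 / 2) t with h' | h'
    · rw [tent_right hs10 h', mul_zero]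
    · rw [trap_one hη hηθ (by linarith) (by linarith), one_mul]
  have hpB2 : p * B2 = B2 := by
    refine cfc_mul_eq ha (trap_continuous _ _) htz (tent_continuous _) (tent_zero _) fun t _ => ?_
    rcases le_total t (s2 / 2) with h | h
    · rw [tent_left hs20 h, mul_zero]
    rcases le_total (3 * s2 / 2) t with h' | h'
    · rw [tent_right hs20 h', mul_zero]
    · rw [trap_one hη hηθ (by linarith) (by linarith), one_mul]
  have hB12 : B1 * B2 = 0 := by
    rw [cfc_mul_eq (h := fun _ => (0 : ℝ)) ha (tent_continuous _) (tent_zero _)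
      (tent_continuous _) (tent_zero _) fun t _ => ?_]
    · exact cfcₙ_const_zero ℝ a
    · rcases le_total t (s1 / 2) with h | h
      · rw [tent_left hs10 h, zero_mul]
      · rw [tent_right hs20 (by linarith), mul_zero]
  have hRB1 := norm_RB hRR hB1s hn1 hpB1 hr
  have hRB2 := norm_RB hRR hB2s hn2 hpB2 hr
  have hpn : ‖p‖ ≤ 1 := cfc_norm_le ha fun t _ => by
    rw [abs_of_nonneg (trap_nonneg hη hηθ t)]; exact trap_le_one _ _ _
  have hRn : ‖R‖ ≤ 2 := by
    have h1 : ‖R‖ * ‖R‖ ≤ 1 + 1 / 100 := by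
      rw [← CStarRing.norm_star_mul_self, hRR]
      exact (norm_sub_le _ _).trans (add_le_add hpn hr)
    nlinarith [norm_nonneg R]
  have hhe : star (SB.hom e) = SB.hom e := by rw [← map_star, he]
  obtain ⟨g', hg'⟩ := corner SB e e (r * B1 * star (r * B1))
  have hg : SB.hom g' = R * B1 * star (R * B1) := by
    rw [hg', hR, star_mul, star_mul, star_mul, hhe]; noncomm_ring
  have hg0 : 0 ≤ g' := hom_reflect_nonneg SB (by rw [hg]; exact mul_star_self_nonneg _)
  have hgs : star g' = g' := (IsSelfAdjoint.of_nonneg hg0).star_eq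
  have hgn : 99 / 100 ≤ ‖g'‖ := by
    rw [← hom_norm SB, hg, CStarRing.norm_self_mul_star]; exact hRB1
  set u := cfcₙ (cutoff (1 / 2)) g' with hu
  set φ := cfcₙ (cutoff (1 / 4)) g' with hφ
  have hus : star u = u := cfc_sa _ _
  have hφs : star φ = φ := cfc_sa _ _
  have huφ : u * φ = u := by
    refine cfc_mul_eq hg0 (cutoff_continuous _) (cutoff_zero_pt (by norm_num))
      (cutoff_continuous _) (cutoff_zero_pt (by norm_num)) fun t _ => ?_
    rcases le_total t (1 / 4) with h | h
    · rw [cutoff_eq_zero (by norm_num) (by linarith), zero_mul]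
    · rw [cutoff_eq_one (ε := 1 / 4) (by norm_num) h, mul_one]
  have hu' : u = g' * cfcₙ (kfun (1 / 2)) g' := (cfc_id_mul hg0 (kfun_continuous (by norm_num))
    (kfun_zero (by norm_num)) fun t _ => by rw [mul_comm, kfun_mul (by norm_num)]).symm
  have hφ' : φ = g' * cfcₙ (kfun (1 / 4)) g' := (cfc_id_mul hg0 (kfun_continuous (by norm_num))
    (kfun_zero (by norm_num)) fun t _ => by rw [mul_comm, kfun_mul (by norm_num)]).symm
  have hφ2 : φ = cfcₙ (kfun (1 / 4)) g' * g' := (cfc_mul_id hg0 (kfun_continuous (by norm_num))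
    (kfun_zero (by norm_num)) fun t _ => kfun_mul (by norm_num) t).symm
  set s := e - φ * e with hs
  set m := SB.hom s * (r * B2) with hm
  obtain ⟨v, hv⟩ := corner SB s (star s) (r * B2 * star (r * B2))
  have hvm : SB.hom v = m * star m := by
    rw [hv, hm, star_mul (SB.hom s), ← map_star SB.hom s]; noncomm_ring
  have hm0 : m ≠ 0 := by
    intro h0
    have h1 : R * B2 = SB.hom φ * R * B2 := by
      have : m = R * B2 - SB.hom φ * R * B2 := by
        rw [hm, hs, map_sub, map_mul, hR]; noncomm_ring
      rw [h0] at this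
      exact sub_eq_zero.mp this.symm
    have h2 : SB.hom φ * R * B2 =
        -(SB.hom (cfcₙ (kfun (1 / 4)) g') * (R * (B1 * B1 * d * B2))) := by
      rw [hφ2, map_mul, hg, star_mul, hB1s]
      calc SB.hom (cfcₙ (kfun (1 / 4)) g') * (R * B1 * (B1 * star R)) * R * B2
          = SB.hom (cfcₙ (kfun (1 / 4)) g') * (R * (B1 * B1 * (star R * R) * B2)) := by
            noncomm_ring
        _ = SB.hom (cfcₙ (kfun (1 / 4)) g') * (R * (B1 * (B1 * (p * B2)) - B1 * B1 * d * B2)) := by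
            rw [hRR]; noncomm_ring
        _ = _ := by rw [hpB2, hB12]; noncomm_ring
    have h3 : ‖R * B2‖ ≤ 8 * (2 * (1 / 100)) := by
      rw [h1, h2, norm_neg]
      have k1 : ‖SB.hom (cfcₙ (kfun (1 / 4)) g')‖ ≤ 8 := by
        rw [hom_norm]
        exact cfc_norm_le hg0 fun t _ => (kfun_abs_le (by norm_num) t).trans (by norm_num)
      have k2 : ‖B1 * B1 * d * B2‖ ≤ 1 / 100 := by
        calc ‖B1 * B1 * d * B2‖ ≤ ‖B1‖ * ‖B1‖ * ‖d‖ * ‖B2‖ := by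
              refine (norm_mul_le _ _).trans ?_
              gcongr
              exact norm_mul₃_le
          _ ≤ _ := by rw [hn1, hn2]; linarith
      refine (norm_mul_le _ _).trans (mul_le_mul k1 ?_ (norm_nonneg _) (by norm_num))
      exact (norm_mul_le _ _).trans (mul_le_mul hRn k2 (norm_nonneg _) (by norm_num))
    nlinarith [norm_nonneg (R * B2)]
  have hus0 : u * s = 0 := by
    rw [hs, mul_sub, ← mul_assoc, huφ, sub_self]
  refine ⟨u, v, hus, cfc_cutoff_ne_zero hg0 (by norm_num) (by linarith), ?_, ?_, ?_, ?_⟩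
  · apply hom_inj SB
    rw [map_star, hvm, star_mul, star_star]
  · rintro rfl
    rw [map_zero] at hvm
    exact hm0 ((CStarRing.mul_star_self_eq_zero_iff _).mp hvm.symm)
  · apply hom_inj SB
    rw [map_mul, hv, map_zero]
    calc SB.hom u * (SB.hom s * (r * B2 * star (r * B2)) * SB.hom (star s))
        = SB.hom u * SB.hom s * (r * B2 * star (r * B2)) * SB.hom (star s) := by noncomm_ring
      _ = 0 := by rw [← map_mul, hus0]; simp
  · intro w hw
    have hwg : w * g' = 0 := by
      apply hom_inj SB
      rw [map_mul, hg', map_zero]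
      calc SB.hom w * (SB.hom e * (r * B1 * star (r * B1)) * SB.hom e)
          = SB.hom w * SB.hom e * (r * B1 * star (r * B1)) * SB.hom e := by noncomm_ring
        _ = 0 := by rw [← map_mul, hw]; simp
    have hws : w * s = 0 := by
      rw [hs, hφ', mul_sub, hw, ← mul_assoc, ← mul_assoc, hwg]; simp
    refine ⟨by rw [hu', ← mul_assoc, hwg, zero_mul], ?_⟩
    apply hom_inj SB
    rw [map_mul, hv, map_zero]
    calc SB.hom w * (SB.hom s * (r * B2 * star (r * B2)) * SB.hom (star s))
        = SB.hom w * SB.hom s * (r * B2 * star (r * B2)) * SB.hom (star s) := by noncomm_ring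
      _ = 0 := by rw [← map_mul, hws]; simp

end Split

section Assembly

set_option linter.unusedSectionVars false

theorem exists_orthogonal (SB : Stabilization A W) {a : W} (ha : 0 ≤ a) (hC : Comp SB a)
    (hacc : ∀ δ : ℝ, 0 < δ → ∃ t ∈ quasispectrum ℝ a, 0 < t ∧ t ≤ δ) {e e1 : A} (he : star e = e)
    (hne : e ≠ 0) (h1 : e1 * e = e) :
    ∃ u : ℕ → A, (∀ k, star (u k) = u k) ∧ (∀ k, u k ≠ 0) ∧ (∀ k l, k ≠ l → u k * u l = 0) ∧
      ∀ k, e1 * u k = u k := by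
  choose U V hU hU0 hV hV0 hUV hw using
    fun c : {c : A // star c = c ∧ c ≠ 0} => split SB ha hC hacc c.2.1 c.2.2
  let v : ℕ → {c : A // star c = c ∧ c ≠ 0} :=
    fun k => Nat.rec ⟨e, he, hne⟩ (fun _ c => ⟨V c, hV c, hV0 c⟩) k
  have hv : ∀ k, (v (k + 1)).1 = V (v k) := fun k => rfl
  have hprop : ∀ (w : A) (k j : ℕ), w * (v k).1 = 0 → w * (v (k + j)).1 = 0 := by
    intro w k j h
    induction j with
    | zero => exact h
    | succ j ih => exact (hw (v (k + j)) w ih).2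
  have hlt : ∀ k l, k < l → U (v k) * U (v l) = 0 := by
    intro k l hkl
    obtain ⟨j, rfl⟩ := Nat.exists_eq_add_of_lt hkl
    have h2 : U (v k) * (v (k + 1)).1 = 0 := hUV (v k)
    have h3 := hprop _ (k + 1) j h2
    have h4 := (hw _ _ h3).1
    rwa [show k + 1 + j = k + j + 1 by ring] at h4
  refine ⟨fun k => U (v k), fun k => hU _, fun k => hU0 _, fun k l hkl => ?_, fun k => ?_⟩
  · rcases lt_or_gt_of_ne hkl with h | h
    · exact hlt k l h
    · have := congrArg star (hlt l k h)
      rwa [star_mul, hU, hU, star_zero] at this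
  · set q := e1 * U (v k) - U (v k) with hq
    have h2 : (star q * e1 - star q) * (v 0).1 = 0 := by
      show (star q * e1 - star q) * e = 0
      rw [sub_mul, mul_assoc, h1, sub_self]
    have h3 := hprop _ 0 k h2
    rw [zero_add] at h3
    have h4 := (hw _ _ h3).1
    have h5 : star q * q = 0 := by
      rw [sub_mul, mul_assoc, ← mul_sub] at h4
      exact h4
    exact sub_eq_zero.mp ((CStarRing.star_mul_self_eq_zero_iff _).mp h5)

theorem norm_sub_cut {a x : W} (hx : star x * x = a) {F : ℝ → ℝ} (hF : Continuous F)
    (hF0 : F 0 = 0) {c : ℝ} (hc : 0 ≤ c)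
    (h : ∀ t ∈ quasispectrum ℝ a, 0 ≤ t → t * (1 - F t) ^ 2 ≤ c ^ 2) :
    ‖x - x * cfcₙ F a‖ ≤ c := by
  have ha : 0 ≤ a := hx ▸ star_mul_self_nonneg x
  have has : IsSelfAdjoint a := IsSelfAdjoint.of_nonneg ha
  set Φ := cfcₙ F a with hΦ
  have hΦs : star Φ = Φ := cfc_sa _ _
  have hid : a = cfcₙ (fun t : ℝ => t) a := (cfcₙ_id' ℝ a has).symm
  have e1 : a * Φ = cfcₙ (fun t => t * F t) a := cfc_id_mul ha hF hF0 fun t _ => rfl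
  have e2 : Φ * a = cfcₙ (fun t => t * F t) a := cfc_mul_id ha hF hF0 fun t _ => mul_comm _ _
  have hc1 : Continuous fun t => t * F t := by fun_prop
  have e3 : Φ * a * Φ = cfcₙ (fun t => t * F t * F t) a := by
    rw [e2]; exact cfc_mul_eq ha hc1 (by simp) hF hF0 fun t _ => rfl
  have hkey : star (x - x * Φ) * (x - x * Φ) = cfcₙ (fun t => t * (1 - F t) ^ 2) a := by
    have h1 : star (x - x * Φ) * (x - x * Φ) = (a - a * Φ) - (Φ * a - Φ * a * Φ) := by
      rw [star_sub, star_mul, hΦs, ← hx]; noncomm_ring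
    rw [h1, e3, e1, e2]
    nth_rw 1 [hid]
    rw [← cfcₙ_sub _ _ a (by fun_prop) (by simp) (by fun_prop) (by simp),
      ← cfcₙ_sub _ _ a (by fun_prop) (by simp) (by fun_prop) (by simp),
      ← cfcₙ_sub _ _ a (by fun_prop) (by simp) (by fun_prop) (by simp)]
    congr 1
    funext t; ring
  have h2 : ‖x - x * Φ‖ * ‖x - x * Φ‖ ≤ c ^ 2 := by
    rw [← CStarRing.norm_star_mul_self, hkey]
    refine norm_cfcₙ_le fun t ht => ?_
    have ht0 := quasispectrum_nonneg_of_nonneg a ha t ht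
    rw [Real.norm_eq_abs, abs_of_nonneg (by positivity)]
    exact h t ht ht0
  exact abs_le_of_sq_le_sq' (by nlinarith) hc |>.2

theorem norm_mul_cut {a x : W} (hx : star x * x = a) {p : ℝ → ℝ} (hp : Continuous p)
    (hp0 : p 0 = 0) {c : ℝ} (hc : 0 ≤ c) (h : ∀ t, 0 ≤ t → t * p t ^ 2 ≤ c ^ 2) :
    ‖x * cfcₙ p a‖ ≤ c := by
  have ha : 0 ≤ a := hx ▸ star_mul_self_nonneg x
  set P := cfcₙ p a with hP
  have hPs : star P = P := cfc_sa _ _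
  have e2 : P * a = cfcₙ (fun t => t * p t) a := cfc_mul_id ha hp hp0 fun t _ => mul_comm _ _
  have hkey : star (x * P) * (x * P) = cfcₙ (fun t => t * p t ^ 2) a := by
    have h1 : star (x * P) * (x * P) = P * a * P := by
      rw [star_mul, hPs, ← hx]; noncomm_ring
    rw [h1, e2]
    exact cfc_mul_eq ha (by fun_prop) (by simp) hp hp0 fun t _ => by ring
  have h2 : ‖x * P‖ * ‖x * P‖ ≤ c ^ 2 := by
    rw [← CStarRing.norm_star_mul_self, hkey]
    refine cfc_norm_le ha fun t ht => ?_
    rw [abs_of_nonneg (by positivity)]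
    exact h t ht
  exact abs_le_of_sq_le_sq' (by nlinarith) hc |>.2

theorem step (SB : Stabilization A W) {a : W} (ha : 0 ≤ a) {u : A} (hu : star u = u) {δ : ℝ}
    (hδ : ∀ (p : ℝ → ℝ) (η : ℝ), Continuous p → (∀ t, 0 ≤ p t) → 0 < η →
      (∀ t, 0 ≤ t → t ≤ η → p t = 0) → (∀ t, δ ≤ t → p t = 0) →
      CuntzLE (cfcₙ p a) (SB.hom (u * u))) {η θ : ℝ} (hη : 0 < η) (h : η ≤ 2 * θ)
    (hθ : 4 * θ ≤ δ) :
    ∃ r y : W, ‖SB.hom u * r‖ ≤ 2 ∧ ‖y‖ ≤ 4 ∧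
      (∀ w, SB.hom u * w = 0 → y * w = 0) ∧
      (∀ w, SB.hom u * w = SB.hom u → y * w = y) ∧
      ∀ D : ℝ → ℝ, Continuous D → D 0 = 0 → (∀ t, 0 ≤ t → trap η θ t * D t = D t) →
        y * (SB.hom u * r * cfcₙ D a) = cfcₙ D a := by
  obtain ⟨r, hr⟩ := comparison_trap SB hu hδ hη h hθ (ε := 1 / 2) (by norm_num)
  set p := cfcₙ (trap η θ) a with hp
  set R := SB.hom u * r with hR
  set d := p - star R * R with hd
  have hRR : star R * R = p - d := by rw [hd]; abel
  have hd1 : ‖d‖ < 1 := by linarith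
  have hpn : ‖p‖ ≤ 1 := cfc_norm_le ha fun t _ => by
    rw [abs_of_nonneg (trap_nonneg hη h t)]; exact trap_le_one _ _ _
  have hRn : ‖R‖ ≤ 2 := by
    have h1 : ‖R‖ * ‖R‖ ≤ 1 + 1 / 2 := by
      rw [← CStarRing.norm_star_mul_self, hRR]
      exact (norm_sub_le _ _).trans (add_le_add hpn hr)
    nlinarith [norm_nonneg R]
  obtain ⟨y, hy, hyn⟩ := exists_neumann d (star R) hr
  have hRs : star R = star r * SB.hom u := by rw [hR, star_mul, ← map_star, hu]
  refine ⟨r, y, hRn, ?_, fun w hw => ?_, fun w hw => ?_, fun D hD hD0 hpD => ?_⟩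
  · rw [norm_star] at hyn; linarith
  · apply unique_neumann hd1
    rw [← mul_assoc, ← sub_mul, hy, hRs, mul_assoc, hw, mul_zero]
  · apply sub_eq_zero.mp
    apply unique_neumann hd1
    calc y * w - y - d * (y * w - y) = (y - d * y) * w - (y - d * y) := by noncomm_ring
      _ = 0 := by rw [hy, hRs, mul_assoc, hw, sub_self]
  · have hpd : p * cfcₙ D a = cfcₙ D a :=
      cfc_mul_eq ha (trap_continuous _ _) (trap_zero_left hη h (by positivity)) hD hD0 hpD
    apply sub_eq_zero.mp
    apply unique_neumann hd1
    set Δ := cfcₙ D a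
    calc y * (R * Δ) - Δ - d * (y * (R * Δ) - Δ)
        = (y - d * y) * R * Δ - Δ + d * Δ := by noncomm_ring
      _ = p * Δ - Δ := by rw [hy, hRR]; noncomm_ring
      _ = 0 := by rw [hpd, sub_self]

theorem assemble (SB : Stabilization A W) {a x : W} (hx : star x * x = a) (hC : Comp SB a)
    {u : ℕ → A} (hu : ∀ k, star (u k) = u k) (hu0 : ∀ k, u k ≠ 0)
    (huo : ∀ k l, k ≠ l → u k * u l = 0) {e1 : A} (he1 : star e1 = e1)
    (heu : ∀ k, e1 * u k = u k) :
    ∃ (θ : ℝ) (M M' : W), 0 < θ ∧ x = x * cfcₙ (cutoff θ) a + M * SB.hom e1 * M' ∧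
      ∀ y : A, x = SB.hom y → M ∈ Set.range SB.hom ∧ M' ∈ Set.range SB.hom := by
  have ha : 0 ≤ a := hx ▸ star_mul_self_nonneg x
  choose δ hδ0 hδ using fun k => hC (u k) (hu k) (hu0 k)
  let c : ℕ → ℝ := fun k => min (δ k / 4) ((1 / 16) ^ k)
  have hc0 : ∀ k, 0 < c k := fun k => lt_min (by have := hδ0 k; positivity) (by positivity)
  obtain ⟨t, ht0, htc, hta⟩ : ∃ t : ℕ → ℝ, (∀ k, 0 < t k) ∧ (∀ k, t k ≤ c k) ∧
      ∀ k, t (k + 1) ≤ t k := by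
    refine ⟨fun k => Nat.rec (c 0) (fun k s => min s (c (k + 1))) k, fun k => ?_, fun k => ?_,
      fun k => min_le_left _ _⟩
    · induction k with
      | zero => exact hc0 0
      | succ k ih => exact lt_min ih (hc0 _)
    · cases k with
      | zero => exact le_rfl
      | succ k => exact min_le_right _ _
  have ht16 : ∀ k, t k ≤ (1 / 16) ^ k := fun k => (htc k).trans (min_le_right _ _)
  have htδ : ∀ k, 4 * t k ≤ δ k := fun k => by
    have := (htc k).trans (min_le_left _ _)
    linarith
  have hη : ∀ k, 0 < t (k + 1) / 2 := fun k => by have := ht0 (k + 1); positivity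
  have hηθ : ∀ k, t (k + 1) / 2 ≤ 2 * t k := fun k => by
    have := hta k; have := ht0 k; have := ht0 (k + 1); linarith
  choose r y hr hy hy0 hy1 hyD using
    fun k => step SB ha (hu k) (hδ k) (hη k) (hηθ k) (htδ k)
  let p : ℕ → ℝ → ℝ := fun k => trap (t (k + 1) / 2) (t k)
  let D : ℕ → ℝ → ℝ := fun k s => cutoff (t (k + 1)) s - cutoff (t k) s
  have hpc : ∀ k, Continuous (p k) := fun k => trap_continuous _ _
  have hp0 : ∀ k, p k 0 = 0 := fun k => trap_zero_left (hη k) (hηθ k) (by have := hη k; positivity)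
  have hDc : ∀ k, Continuous (D k) := fun k => (cutoff_continuous _).sub (cutoff_continuous _)
  have hD0 : ∀ k, D k 0 = 0 := fun k => by
    show cutoff _ _ - cutoff _ _ = _
    rw [cutoff_zero_pt (ht0 _), cutoff_zero_pt (ht0 _), sub_zero]
  have hpD : ∀ k s, 0 ≤ s → p k s * D k s = D k s := by
    intro k s _
    rcases le_total s (t (k + 1) / 2) with h | h
    · have : D k s = 0 := by
        show cutoff _ _ - cutoff _ _ = _
        rw [cutoff_eq_zero (ht0 _) h, cutoff_eq_zero (ht0 _) (by linarith [hta k]), sub_zero]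
      rw [this, mul_zero]
    rcases le_total (t k) s with h' | h'
    · have : D k s = 0 := by
        show cutoff _ _ - cutoff _ _ = _
        rw [cutoff_eq_one (ht0 _) h', cutoff_eq_one (ht0 _) (by linarith [hta k]), sub_self]
      rw [this, mul_zero]
    · have : p k s = 1 := trap_one (hη k) (hηθ k) h (by linarith [ht0 k])
      rw [this, one_mul]
  have hDn : ∀ k, ‖cfcₙ (D k) a‖ ≤ 1 := fun k => cfc_norm_le ha fun s hs => by
    show |cutoff _ _ - cutoff _ _| ≤ 1
    rw [abs_le]
    constructor <;> linarith [cutoff_nonneg (t k) s, cutoff_le_one (t k) s,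
      cutoff_nonneg (t (k + 1)) s, cutoff_le_one (t (k + 1)) s]
  have hpx : ∀ k, ‖x * cfcₙ (p k) a‖ ≤ 2 * (1 / 4) ^ k := by
    intro k
    refine norm_mul_cut hx (hpc k) (hp0 k) (by positivity) fun s hs => ?_
    have e4 : (2 * (1 / 4 : ℝ) ^ k) ^ 2 = 4 * (1 / 16) ^ k := by
      rw [mul_pow, ← pow_mul, mul_comm k 2, pow_mul]; norm_num
    rw [e4]
    have q0 : 0 ≤ p k s := trap_nonneg (hη k) (hηθ k) s
    have q1 : p k s ≤ 1 := trap_le_one _ _ _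
    rcases le_total (4 * t k) s with h | h
    · have : p k s = 0 := trap_zero_right (hη k) (hηθ k) h
      rw [this]; simp
    · have : p k s ^ 2 ≤ 1 := pow_le_one₀ q0 q1
      nlinarith [ht16 k]
  let m : ℕ → W := fun k => (2 : ℂ) ^ k • (x * cfcₙ (p k) a * y k)
  let m' : ℕ → W := fun k => (1 / 2 : ℂ) ^ k • (SB.hom (u k) * r k * cfcₙ (D k) a)
  have hmn : ∀ k, ‖m k‖ ≤ 8 * (1 / 2) ^ k := by
    intro k
    show ‖(2 : ℂ) ^ k • (x * cfcₙ (p k) a * y k)‖ ≤ _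
    rw [norm_smul, norm_pow, Complex.norm_ofNat]
    have h1 : ‖x * cfcₙ (p k) a * y k‖ ≤ 2 * (1 / 4) ^ k * 4 :=
      (norm_mul_le _ _).trans (mul_le_mul (hpx k) (hy k) (norm_nonneg _) (by positivity))
    calc (2 : ℝ) ^ k * ‖x * cfcₙ (p k) a * y k‖ ≤ 2 ^ k * (2 * (1 / 4) ^ k * 4) := by gcongr
      _ = 8 * (2 * (1 / 4)) ^ k := by rw [mul_pow]; ring
      _ = _ := by norm_num
  have hmn' : ∀ k, ‖m' k‖ ≤ 2 * (1 / 2) ^ k := by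
    intro k
    show ‖(1 / 2 : ℂ) ^ k • (SB.hom (u k) * r k * cfcₙ (D k) a)‖ ≤ _
    rw [norm_smul, norm_pow]
    have h1 : ‖SB.hom (u k) * r k * cfcₙ (D k) a‖ ≤ 2 * 1 :=
      (norm_mul_le _ _).trans (mul_le_mul (hr k) (hDn k) (norm_nonneg _) (by positivity))
    have h2 : ‖(1 / 2 : ℂ)‖ = 1 / 2 := by simp
    rw [h2]
    calc (1 / 2 : ℝ) ^ k * _ ≤ (1 / 2) ^ k * (2 * 1) := by gcongr
      _ = _ := by ring
  have hgeo : Summable fun k : ℕ => (1 / 2 : ℝ) ^ k := summable_geometric_two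
  have hms : Summable m := Summable.of_norm_bounded (hgeo.mul_left 8) hmn
  have hms' : Summable m' := Summable.of_norm_bounded (hgeo.mul_left 2) hmn'
  have hlim := hms.hasSum.tendsto_sum_nat
  have hlim' := hms'.hasSum.tendsto_sum_nat
  have hue : ∀ k, SB.hom (u k) * SB.hom e1 = SB.hom (u k) := by
    intro k
    have := congrArg star (heu k)
    rw [star_mul, hu, he1] at this
    rw [← map_mul, this]
  have hme : ∀ k, m k * SB.hom e1 = m k := by
    intro k
    show ((2 : ℂ) ^ k • (x * cfcₙ (p k) a * y k)) * SB.hom e1 = _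
    rw [smul_mul_assoc, mul_assoc, hy1 k _ (hue k)]
  have hmm : ∀ k, m k * m' k = x * cfcₙ (D k) a := by
    intro k
    show ((2 : ℂ) ^ k • (x * cfcₙ (p k) a * y k)) *
      ((1 / 2 : ℂ) ^ k • (SB.hom (u k) * r k * cfcₙ (D k) a)) = _
    rw [smul_mul_smul_comm, ← mul_pow, mul_assoc _ (y k), hyD k (D k) (hDc k) (hD0 k) (hpD k),
      mul_assoc, cfc_mul_eq ha (hpc k) (hp0 k) (hDc k) (hD0 k) (hpD k)]
    norm_num
  have hml : ∀ k l, k ≠ l → m k * m' l = 0 := by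
    intro k l hkl
    show ((2 : ℂ) ^ k • (x * cfcₙ (p k) a * y k)) *
      ((1 / 2 : ℂ) ^ l • (SB.hom (u l) * r l * cfcₙ (D l) a)) = _
    have : y k * SB.hom (u l) = 0 := hy0 k _ (by rw [← map_mul, huo k l hkl, map_zero])
    rw [smul_mul_smul_comm, mul_assoc _ (y k), ← mul_assoc (y k), ← mul_assoc (y k), this]
    simp
  have hpart : ∀ N, (∑ k ∈ Finset.range N, m k) * SB.hom e1 * (∑ k ∈ Finset.range N, m' k) =
      x * cfcₙ (cutoff (t N)) a - x * cfcₙ (cutoff (t 0)) a := by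
    intro N
    rw [Finset.sum_mul, Finset.sum_congr rfl fun k _ => hme k, Finset.sum_mul_sum]
    have h1 : ∀ k ∈ Finset.range N, ∑ l ∈ Finset.range N, m k * m' l =
        x * cfcₙ (cutoff (t (k + 1))) a - x * cfcₙ (cutoff (t k)) a := by
      intro k hk
      rw [Finset.sum_eq_single_of_mem k hk fun l _ hl => hml k l (Ne.symm hl), hmm, ← mul_sub]
      congr 1
      exact cfcₙ_sub _ _ a (cutoff_continuous _).continuousOn (cutoff_zero_pt (ht0 _))
        (cutoff_continuous _).continuousOn (cutoff_zero_pt (ht0 _))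
    rw [Finset.sum_congr rfl h1]
    exact Finset.sum_range_sub (fun k => x * cfcₙ (cutoff (t k)) a) N
  have hxF : Tendsto (fun N => x * cfcₙ (cutoff (t N)) a) atTop (𝓝 x) := by
    rw [tendsto_iff_norm_sub_tendsto_zero]
    refine squeeze_zero (fun _ => norm_nonneg _) (fun N => ?_)
      (tendsto_pow_atTop_nhds_zero_of_lt_one (r := (1 / 4 : ℝ)) (by norm_num) (by norm_num))
    rw [norm_sub_rev]
    refine norm_sub_cut hx (cutoff_continuous _) (cutoff_zero_pt (ht0 _)) (by positivity)
      fun s _ hs => ?_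
    have e4 : ((1 / 4 : ℝ) ^ N) ^ 2 = (1 / 16) ^ N := by
      rw [← pow_mul, mul_comm N 2, pow_mul]; norm_num
    rw [e4]
    rcases le_total (t N) s with h | h
    · rw [cutoff_eq_one (ht0 _) h]; simp
    · have q : (1 - cutoff (t N) s) ^ 2 ≤ 1 := pow_le_one₀
        (by linarith [cutoff_le_one (t N) s]) (by linarith [cutoff_nonneg (t N) s])
      nlinarith [ht16 N]
  have hL := (hlim.mul_const (SB.hom e1)).mul hlim'
  have hL2 : Tendsto (fun N => (∑ k ∈ Finset.range N, m k) * SB.hom e1 *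
      (∑ k ∈ Finset.range N, m' k)) atTop (𝓝 (x - x * cfcₙ (cutoff (t 0)) a)) := by
    simp_rw [hpart]
    exact hxF.sub_const _
  have heq := tendsto_nhds_unique hL hL2
  refine ⟨t 0, ∑' k, m k, ∑' k, m' k, ht0 0, by rw [heq]; abel, fun z hz => ?_⟩
  have has : a = SB.hom (star z * z) := by rw [← hx, hz, map_mul, map_star]
  have hzz : star (star z * z) = star z * z := by rw [star_mul, star_star]
  have hcl := hom_range_closed SB
  have hmr : ∀ k, m k ∈ Set.range SB.hom := by
    intro k
    obtain ⟨q, hq⟩ := corner SB (z * cfcₙ (p k) (star z * z)) e1 (y k)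
    refine ⟨(2 : ℂ) ^ k • q, ?_⟩
    rw [map_smul, hq, mul_assoc, hy1 k _ (hue k), map_mul, hom_cfc SB (hpc k) (hp0 k) hzz, ← has,
      ← hz]
  have hmr' : ∀ k, m' k ∈ Set.range SB.hom := by
    intro k
    obtain ⟨q, hq⟩ := corner SB (u k) (cfcₙ (D k) (star z * z)) (r k)
    refine ⟨(1 / 2 : ℂ) ^ k • q, ?_⟩
    rw [map_smul, hq, hom_cfc SB (hDc k) (hD0 k) hzz, ← has]
  choose ν hν using hmr
  choose ν' hν' using hmr'
  refine ⟨hcl.mem_of_tendsto hlim (Eventually.of_forall fun N => ?_),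
    hcl.mem_of_tendsto hlim' (Eventually.of_forall fun N => ?_)⟩
  · exact ⟨∑ k ∈ Finset.range N, ν k, by rw [map_sum]; exact Finset.sum_congr rfl fun k _ => hν k⟩
  · exact ⟨∑ k ∈ Finset.range N, ν' k, by rw [map_sum]; exact Finset.sum_congr rfl fun k _ => hν' k⟩

theorem final_decomp (SB : Stabilization A W) (hσ : SigmaUnital A) (hs : IsSimpleCStar A)
    (hsc : StrictComparison W) (x : W) (hfin : ∀ τ : QuasiTrace W, dTau τ (star x * x) < ∞)
    (hω : OmegaZero SB (star x * x)) :
    ∃ (e1 : A) (θ : ℝ) (M M' : W), e1 ∈ pedersen A ∧ SB.hom e1 ∈ pedersen W ∧ 0 < θ ∧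
      x = x * cfcₙ (cutoff θ) (star x * x) + M * SB.hom e1 * M' ∧
      ∀ y : A, x = SB.hom y → M ∈ Set.range SB.hom ∧ M' ∈ Set.range SB.hom := by
  obtain ⟨e, e1, he, hne, hep, h1, h, h1p, hp⟩ := exists_units SB hσ hs
  have ha : 0 ≤ star x * x := star_mul_self_nonneg x
  have hC : Comp SB (star x * x) := fun u hu hu0 =>
    comparison SB hσ hs hsc he hne h1 h hp ha hfin (hω e he hne hep) hu hu0
  have hes : star e = e := (IsSelfAdjoint.of_nonneg he).star_eq
  by_cases hacc : ∀ δ : ℝ, 0 < δ → ∃ t ∈ quasispectrum ℝ (star x * x), 0 < t ∧ t ≤ δ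
  · obtain ⟨u, hu, hu0, huo, heu⟩ := exists_orthogonal SB ha hC hacc hes hne h
    obtain ⟨θ, M, M', k1, k2, k3⟩ := assemble SB rfl hC hu hu0 huo h1 heu
    exact ⟨e1, θ, M, M', h1p, hp, k1, k2, k3⟩
  · push Not at hacc
    obtain ⟨δ, hδ, hgap⟩ := hacc
    refine ⟨e1, δ, 0, 0, h1p, hp, hδ, ?_, fun y _ => ⟨⟨0, map_zero _⟩, ⟨0, map_zero _⟩⟩⟩
    have := norm_sub_cut (x := x) rfl (cutoff_continuous δ) (cutoff_zero_pt hδ) le_rfl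
      fun t ht ht0 => by
        rcases ht0.eq_or_lt with rfl | hlt
        · simp
        · rw [cutoff_eq_one hδ (hgap t ht hlt).le]; simp
    have h0 := sub_eq_zero.mp (norm_le_zero_iff.mp this)
    simpa using h0

end Assembly

/-- **Corollary.** Let `A` be a σ-unital simple C*-algebra with `QT̃(A) ≠ {0}` and strict
comparison, and `x ∈ A ⊗ K` with `d_τ(x*x) < ∞` for all `τ ∈ QT̃(A)` and `ω(x*x) = 0`.
Then `x ∈ Ped(A ⊗ K)`; if moreover `x ∈ A`, then `x ∈ Ped(A)`. -/
theorem mem_pedersen_of_finite_continuous_dimension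
    (SB : Stabilization A W)
    (hσ : SigmaUnital A) (hsimple : IsSimpleCStar A)
    (hqt : ∃ τ : QuasiTrace W, ¬ τ.IsZero)
    (hsc : StrictComparison W)
    (x : W) (hfin : ∀ τ : QuasiTrace W, dTau τ (star x * x) < ∞)
    (hω : OmegaZero SB (star x * x)) :
    x ∈ pedersen W ∧ ∀ y : A, x = SB.emb 0 0 y → y ∈ pedersen A := by
  obtain ⟨e1, θ, M, M', h1p, hp, hθ, hx, hr⟩ := final_decomp SB hσ hsimple hsc x hfin hω
  have hθ2 : 0 < θ / 2 := by positivity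
  constructor
  · refine Set.mem_iInter₂.mpr fun J hJ => ?_
    obtain ⟨-, -, hadd, -, hmul⟩ := hJ.1
    have k1 := cfc_mem_ideal hJ.1 hJ.2 (star_mul_self_nonneg x) (cutoff_continuous θ) hθ2
      (fun t _ ht => cutoff_eq_zero hθ ht)
    have k2 : SB.hom e1 ∈ J := Set.mem_iInter₂.mp hp J hJ
    rw [hx]
    exact hadd _ (hmul _ k1 x trivial).2 _ (hmul _ (hmul _ k2 M trivial).2 M' trivial).1
  · intro y hy
    change x = SB.hom y at hy
    obtain ⟨⟨μ, hμ⟩, ⟨μ', hμ'⟩⟩ := hr y hy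
    have hyy : y = y * cfcₙ (cutoff θ) (star y * y) + μ * e1 * μ' := by
      apply hom_inj SB
      rw [map_add, map_mul, map_mul, map_mul, hμ, hμ', hom_cfc SB (cutoff_continuous θ)
        (cutoff_zero_pt hθ) (by rw [star_mul, star_star]), map_mul, map_star, ← hy]
      exact hx
    refine Set.mem_iInter₂.mpr fun J hJ => ?_
    obtain ⟨-, -, hadd, -, hmul⟩ := hJ.1
    have k1 := cfc_mem_ideal hJ.1 hJ.2 (star_mul_self_nonneg y) (cutoff_continuous θ) hθ2
      (fun t _ ht => cutoff_eq_zero hθ ht)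
    have k2 : e1 ∈ J := Set.mem_iInter₂.mp h1p J hJ
    rw [hyy]
    exact hadd _ (hmul _ k1 y trivial).2 _ (hmul _ (hmul _ k2 μ trivial).2 μ' trivial).1
end Paper
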